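/- arXiv:solv-int/9812021 — 8 statements merged into one kernel-verified Lean document; each statement's English description precedes it below -/
import Mathlib

section
/- For every index k ∈ {1,…,N} and every sign ε ∈ {+1,−1}, the following identity holds: ∑_{a=1}^{N} [sinh ζ / (sin(μ_k−λ_a+εiζ)·sin(μ_k−λ_a))] · [∏_{m=1}^{N} sin(λ_a−μ_m)] / [∏_{m≠a} sin(λ_a−λ_m)] = ε·i·∏_{m=1}^{N} sin(μ_k−μ_m+εiζ)/sin(μ_k−λ_m+εiζ). -/
open Finset

/-!
With `z = μ_k + ε i ζ`, the factor `sin (λ_a - μ_k)` of the numerator cancels `sin (μ_k - λ_a)` up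
to a sign, and `sin (z - μ_k) = ε i sinh ζ`. What remains, after multiplication by
`∏ m, sin (z - λ_m)`, is Lagrange interpolation at the nodes `λ_a` of the trigonometric polynomial
`∏_{m ≠ k} sin (z - μ_m)` (`sin_interpolation`). That is ordinary Lagrange interpolation in the
variable `x = exp (2 i z)`: since `sin (z - w)` equals `exp (-i z) * (x - exp (2 i w))` up to a
factor depending only on `w`, a product of `N - 1` such sines is `exp (-i z) ^ (N - 1)` times a
polynomial of degree `N - 1` in `x`, which `N` distinct nodes determine.
-/

lemma sin_sub_eq_exp (z w : ℂ) :
    Complex.sin (z - w) = Complex.exp (-(Complex.I * z)) *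
      ((Complex.exp (-(Complex.I * w)) / (2 * Complex.I)) *
        (Complex.exp (2 * Complex.I * z) - Complex.exp (2 * Complex.I * w))) := by
  have h1 : Complex.exp (2 * Complex.I * z) =
      Complex.exp (Complex.I * z) * Complex.exp (Complex.I * z) := by
    rw [← Complex.exp_add]; ring_nf
  have h2 : Complex.exp (2 * Complex.I * w) =
      Complex.exp (Complex.I * w) * Complex.exp (Complex.I * w) := by
    rw [← Complex.exp_add]; ring_nf
  have h3 : Complex.exp (-((z - w) * Complex.I)) =
      Complex.exp (-(Complex.I * z)) * Complex.exp (Complex.I * w) := by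
    rw [← Complex.exp_add]; ring_nf
  have h4 : Complex.exp ((z - w) * Complex.I) =
      Complex.exp (Complex.I * z) * Complex.exp (-(Complex.I * w)) := by
    rw [← Complex.exp_add]; ring_nf
  rw [Complex.sin, neg_mul, h3, h4, h1, h2]
  simp only [Complex.exp_neg]
  have hz := Complex.exp_ne_zero (Complex.I * z)
  have hw := Complex.exp_ne_zero (Complex.I * w)
  field_simp
  rw [Complex.I_sq]
  ring

/-- Lagrange interpolation of a product of `#S - 1` shifted sines at the `#S` nodes `l a`. -/
lemma sin_interpolation {ι κ : Type*} [DecidableEq ι] (S : Finset ι) (T : Finset κ)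
    (hcard : #S = #T + 1) (l : ι → ℂ) (u : κ → ℂ)
    (hl : ∀ a ∈ S, ∀ b ∈ S, a ≠ b → Complex.sin (l a - l b) ≠ 0) (z : ℂ) :
    ∏ m ∈ T, Complex.sin (z - u m) =
      ∑ a ∈ S, (∏ m ∈ T, Complex.sin (l a - u m)) *
        ∏ m ∈ S.erase a, (Complex.sin (z - l m) / Complex.sin (l a - l m)) := by
  set e : ℂ → ℂ := fun w => Complex.exp (2 * Complex.I * w) with he
  set c : ℂ → ℂ := fun w => Complex.exp (-(Complex.I * w)) with hc
  have hc0 : ∀ w, c w ≠ 0 := fun w => Complex.exp_ne_zero _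
  have hs : ∀ z w, Complex.sin (z - w) = c z * ((c w / (2 * Complex.I)) * (e z - e w)) :=
    sin_sub_eq_exp
  have hinj : Set.InjOn (fun a => e (l a)) S := by
    intro a ha b hb hab
    by_contra hne
    apply hl a ha b hb hne
    rw [hs, show e (l a) = e (l b) from hab]
    simp
  set P : Polynomial ℂ := ∏ m ∈ T, (Polynomial.X - Polynomial.C (e (u m))) with hP
  have hdeg : P.degree < #S := by
    rw [hP, Polynomial.degree_prod]
    simp [hcard]
    exact_mod_cast Nat.lt_succ_self _
  have hPz : ∀ w, ∏ m ∈ T, Complex.sin (w - u m) =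
      c w ^ #T * ((∏ m ∈ T, c (u m) / (2 * Complex.I)) * P.eval (e w)) := by
    intro w
    simp only [hs, prod_mul_distrib, prod_const, hP, Polynomial.eval_prod, Polynomial.eval_sub,
      Polynomial.eval_X, Polynomial.eval_C]
  have hB : ∀ a ∈ S, ∏ m ∈ S.erase a, (Complex.sin (z - l m) / Complex.sin (l a - l m)) =
      (c z / c (l a)) ^ #T * (Lagrange.basis S (fun a => e (l a)) a).eval (e z) := by
    intro a ha
    have hT : #T = #(S.erase a) := by rw [card_erase_of_mem ha]; omega
    rw [Lagrange.basis, Polynomial.eval_prod, hT, ← prod_const, ← prod_mul_distrib]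
    refine prod_congr rfl fun m hm => ?_
    rw [hs, hs]
    simp only [Lagrange.basisDivisor, Polynomial.eval_mul, Polynomial.eval_C, Polynomial.eval_sub,
      Polynomial.eval_X]
    have hne : e (l a) - e (l m) ≠ 0 := by
      intro h
      exact (mem_erase.mp hm).1 (hinj (mem_erase.mp hm).2 ha (sub_eq_zero.mp h).symm)
    have h1 := hc0 (l a)
    have h2 := hc0 (l m)
    have h3 := Complex.I_ne_zero
    field_simp
  have hL := congrArg (Polynomial.eval (e z)) (Lagrange.eq_interpolate hinj hdeg)
  rw [Lagrange.interpolate_apply, Polynomial.eval_finsetSum] at hL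
  rw [hPz, hL, mul_sum, mul_sum]
  refine sum_congr rfl fun a ha => ?_
  rw [hPz, hB a ha, Polynomial.eval_mul, Polynomial.eval_C, div_pow]
  have h1 := pow_ne_zero #T (hc0 (l a))
  field_simp

/-- the summation identity (A.1) of the paper, for both signs ε. -/
theorem stmt_0 (N : ℕ) (hN : 0 < N) (ζ : ℝ) (hζ : 0 < ζ)
    (lam mu : Fin N → ℝ)
    (hlam : ∀ a b : Fin N, a ≠ b → ∀ n : ℤ, lam a - lam b ≠ n * Real.pi)
    (hmulam : ∀ k a : Fin N, ∀ n : ℤ, mu k - lam a ≠ n * Real.pi)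
    (k : Fin N) (ε : ℝ) (hε : ε = 1 ∨ ε = -1) :
    ∑ a : Fin N,
      Complex.sinh ζ /
          (Complex.sin ((mu k : ℂ) - (lam a : ℂ) + ε * Complex.I * ζ) *
            Complex.sin ((mu k : ℂ) - (lam a : ℂ))) *
        ((∏ m : Fin N, Complex.sin ((lam a : ℂ) - (mu m : ℂ))) /
          ∏ m ∈ univ.erase a, Complex.sin ((lam a : ℂ) - (lam m : ℂ))) =
    ε * Complex.I *
      ∏ m : Fin N,
        Complex.sin ((mu k : ℂ) - (mu m : ℂ) + ε * Complex.I * ζ) /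
          Complex.sin ((mu k : ℂ) - (lam m : ℂ) + ε * Complex.I * ζ) := by
  have hε2 : (ε : ℂ) * ε = 1 := by rcases hε with rfl | rfl <;> norm_num
  have hε0 : ε ≠ 0 := by rcases hε with rfl | rfl <;> norm_num
  set z : ℂ := (mu k : ℂ) + ε * Complex.I * ζ with hz
  have hzw : ∀ w : ℂ, (mu k : ℂ) - w + ε * Complex.I * ζ = z - w := fun w => by rw [hz]; ring
  simp only [hzw]
  have hll : ∀ a b : Fin N, a ≠ b → Complex.sin ((lam a : ℂ) - lam b) ≠ 0 := by
    intro a b hab h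
    obtain ⟨n, hn⟩ := Complex.sin_eq_zero_iff.mp h
    exact hlam a b hab n (by exact_mod_cast hn)
  have hml : ∀ a : Fin N, Complex.sin ((mu k : ℂ) - lam a) ≠ 0 := by
    intro a h
    obtain ⟨n, hn⟩ := Complex.sin_eq_zero_iff.mp h
    exact hmulam k a n (by exact_mod_cast hn)
  -- The zeros of the sine are real, while `z - lam a` has imaginary part `ε * ζ`.
  have hzl : ∀ a : Fin N, Complex.sin (z - lam a) ≠ 0 := by
    intro a h
    obtain ⟨n, hn⟩ := Complex.sin_eq_zero_iff.mp h
    have := congrArg Complex.im hn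
    simp [hz, hε0, hζ.ne'] at this
  have hzk : Complex.sin (z - mu k) = ε * Complex.I * Complex.sinh ζ := by
    have h : z - mu k = (ε * ζ : ℂ) * Complex.I := by rw [hz]; ring
    rw [h, Complex.sin_mul_I]
    rcases hε with rfl | rfl
    · simp [mul_comm]
    · simp [mul_comm]
  have key := sin_interpolation (univ : Finset (Fin N)) ((univ : Finset (Fin N)).erase k)
    (by rw [card_erase_of_mem (mem_univ k), card_univ, Fintype.card_fin]; omega)
    (fun a => (lam a : ℂ)) (fun m => (mu m : ℂ)) (fun a _ b _ hab => hll a b hab) z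
  rw [prod_div_distrib, ← mul_prod_erase univ (fun m => Complex.sin (z - mu m)) (mem_univ k), hzk,
    key, mul_sum, sum_div, mul_sum]
  refine sum_congr rfl fun a _ => ?_
  rw [prod_div_distrib, ← mul_prod_erase univ (fun m => Complex.sin (z - lam m)) (mem_univ a),
    ← mul_prod_erase univ (fun m => Complex.sin ((lam a : ℂ) - mu m)) (mem_univ k),
    ← neg_sub (mu k : ℂ) (lam a : ℂ), Complex.sin_neg]
  have h1 := hzl a
  have h2 := hml a
  have h3 : ∏ m ∈ univ.erase a, Complex.sin (z - lam m) ≠ 0 := prod_ne_zero_iff.mpr fun m _ => hzl m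
  have h4 : ∏ m ∈ univ.erase a, Complex.sin ((lam a : ℂ) - lam m) ≠ 0 :=
    prod_ne_zero_iff.mpr fun m hm => hll a m (mem_erase.mp hm).1.symm
  field_simp
  rw [Complex.I_sq, sq, hε2]
  ring
end

section
/- For every index k ∈ {1,…,N}: ∑_{a=1}^{N} 2π·K(μ_k−λ_a) · [∏_{m=1}^{N} sin(λ_a−μ_m)] / [∏_{m≠a} sin(λ_a−λ_m)] = i·( ∏_{m=1}^{N} sin(μ_k−μ_m+iζ)/sin(μ_k−λ_m+iζ) − ∏_{m=1}^{N} sin(μ_k−μ_m−iζ)/sin(μ_k−λ_m−iζ) ). -/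
open Finset

/-!
Put `Λ = exp (2iλ)`, `M = exp (2iμ)`. Since `sin (x - y) = (X - Y) / (2i exp (ix) exp (iy))`, the claim
becomes one about the rational function `∏ (z - M_m) / ∏ (z - Λ_m)`, whose partial fraction
decomposition is `1 + ∑ R_a / (z - Λ_a)`, by Lagrange interpolation at the `Λ_a` of the difference of
the two monic polynomials of degree `N`. Subtracting its values at `z = exp (2i(μ_k ± iζ))` removes
the constant `1`, and `1 / (z₊ - Λ_a) - 1 / (z₋ - Λ_a)` is the kernel `K (μ_k - λ_a)` up to factors
that cancel those of the residues.
-/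

/-- Partial fractions for a quotient of two monic polynomials of equal degree, with simple poles. -/
lemma partial_fraction (N : ℕ) (L M : Fin N → ℂ) (hL : Function.Injective L) (z : ℂ)
    (hz : ∀ a, z ≠ L a) :
    ∏ m, (z - M m) / (z - L m) =
      1 + ∑ a, (∏ m, (L a - M m)) / (∏ m ∈ univ.erase a, (L a - L m)) / (z - L a) := by
  have hprod : ∏ m, (z - L m) ≠ 0 := prod_ne_zero_iff.2 fun a _ => sub_ne_zero.2 (hz a)
  set P := Lagrange.nodal univ M - Lagrange.nodal univ L with hP
  have hdeg : P.degree < (univ : Finset (Fin N)).card := by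
    have h := Polynomial.degree_sub_lt_left (p := Lagrange.nodal univ M) (q := Lagrange.nodal univ L)
      (by simp [Lagrange.degree_nodal])
      (Lagrange.nodal_monic.ne_zero)
      (by rw [Lagrange.nodal_monic.leadingCoeff, Lagrange.nodal_monic.leadingCoeff])
    simpa [Lagrange.degree_nodal] using h
  have hint := Lagrange.eq_interpolate (s := univ) (v := L) hL.injOn hdeg
  have hev := congrArg (Polynomial.eval z) hint
  rw [Lagrange.eval_interpolate_not_at_node _ (fun i _ => hz i), hP, Polynomial.eval_sub,
    Lagrange.eval_nodal, Lagrange.eval_nodal] at hev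
  rw [prod_div_distrib, div_eq_iff hprod, sub_eq_iff_eq_add.1 hev, add_mul, one_mul, mul_comm,
    add_comm]
  congr 2
  refine sum_congr rfl fun a _ => ?_
  rw [Polynomial.eval_sub, Lagrange.eval_nodal, Lagrange.eval_nodal,
    prod_eq_zero (f := fun i => L a - L i) (mem_univ a) (sub_self _), sub_zero,
    Lagrange.nodalWeight, prod_inv_distrib]
  simp only [div_eq_mul_inv]
  ring

lemma sin_sub_eq (x y : ℂ) :
    Complex.sin (x - y) =
      (Complex.exp (Complex.I * x) ^ 2 - Complex.exp (Complex.I * y) ^ 2) /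
        (2 * Complex.I * Complex.exp (Complex.I * x) * Complex.exp (Complex.I * y)) := by
  have hx := Complex.exp_ne_zero (Complex.I * x)
  have hy := Complex.exp_ne_zero (Complex.I * y)
  have hI := Complex.I_ne_zero
  rw [Complex.sin, show -(x - y) * Complex.I = Complex.I * y - Complex.I * x by ring,
    show (x - y) * Complex.I = Complex.I * x - Complex.I * y by ring, Complex.exp_sub,
    Complex.exp_sub]
  field_simp
  linear_combination (Complex.exp (Complex.I * y) ^ 2 - Complex.exp (Complex.I * x) ^ 2) *
    Complex.I_sq

/-- The trigonometric quotient equals the rational one up to a factor independent of `w`. -/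
lemma sin_quotient (N : ℕ) (l m : Fin N → ℂ) (w : ℂ) :
    ∏ j, Complex.sin (w - m j) / Complex.sin (w - l j) =
      (∏ j, Complex.exp (Complex.I * l j) / Complex.exp (Complex.I * m j)) *
      ∏ j, (Complex.exp (Complex.I * w) ^ 2 - Complex.exp (Complex.I * m j) ^ 2) /
        (Complex.exp (Complex.I * w) ^ 2 - Complex.exp (Complex.I * l j) ^ 2) := by
  rw [← prod_mul_distrib]
  refine prod_congr rfl fun j _ => ?_
  have hw := Complex.exp_ne_zero (Complex.I * w)
  have hI := Complex.I_ne_zero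
  rw [sin_sub_eq, sin_sub_eq, div_div_div_eq, div_mul_div_comm,
    ← mul_div_mul_left (Complex.exp (Complex.I * l j) * _) _
      (mul_ne_zero (mul_ne_zero two_ne_zero hI) hw)]
  congr 1 <;> ring

/-- The residue of the trigonometric quotient at `l a`; compared with the rational quotient it
carries the extra factor `(d exp (2iz) / dz)⁻¹` at `z = l a`. -/
lemma sin_residue (N : ℕ) (l m : Fin N → ℂ) (a : Fin N) :
    (∏ j, Complex.sin (l a - m j)) / ∏ j ∈ univ.erase a, Complex.sin (l a - l j) =
      (∏ j, Complex.exp (Complex.I * l j) / Complex.exp (Complex.I * m j)) *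
      ((∏ j, (Complex.exp (Complex.I * l a) ^ 2 - Complex.exp (Complex.I * m j) ^ 2)) /
        ∏ j ∈ univ.erase a,
          (Complex.exp (Complex.I * l a) ^ 2 - Complex.exp (Complex.I * l j) ^ 2)) /
      (2 * Complex.I * Complex.exp (Complex.I * l a) ^ 2) := by
  have hw := Complex.exp_ne_zero (Complex.I * l a)
  have hI := Complex.I_ne_zero
  simp only [sin_sub_eq, prod_div_distrib]
  have h1 := mul_prod_erase univ
    (fun j => 2 * Complex.I * Complex.exp (Complex.I * l a) * Complex.exp (Complex.I * l j))
    (mem_univ a)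
  have hl : ∏ j, Complex.exp (Complex.I * l j) ≠ 0 :=
    prod_ne_zero_iff.2 fun j _ => Complex.exp_ne_zero _
  have hm : ∏ j, Complex.exp (Complex.I * m j) ≠ 0 :=
    prod_ne_zero_iff.2 fun j _ => Complex.exp_ne_zero _
  have h2 : ∏ j ∈ univ.erase a,
      (2 * Complex.I * Complex.exp (Complex.I * l a) * Complex.exp (Complex.I * l j)) =
      (∏ _j : Fin N, 2 * Complex.I * Complex.exp (Complex.I * l a)) *
        (∏ j, Complex.exp (Complex.I * l j)) /
          (2 * Complex.I * Complex.exp (Complex.I * l a) ^ 2) := by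
    rw [eq_div_iff (mul_ne_zero (mul_ne_zero two_ne_zero hI) (pow_ne_zero 2 hw)), ← prod_mul_distrib, ← h1]
    ring
  have hc : ∏ _j : Fin N, 2 * Complex.I * Complex.exp (Complex.I * l a) ≠ 0 :=
    prod_ne_zero_iff.2 fun j _ => mul_ne_zero (mul_ne_zero two_ne_zero hI) hw
  rw [h2, prod_mul_distrib (f := fun _ => 2 * Complex.I * Complex.exp (Complex.I * l a))
    (g := fun j => Complex.exp (Complex.I * m j))]
  generalize (∏ _j : Fin N, 2 * Complex.I * Complex.exp (Complex.I * l a)) = c at *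
  generalize (∏ j, Complex.exp (Complex.I * l j)) = A at *
  generalize (∏ j, Complex.exp (Complex.I * m j)) = B at *
  rw [div_div_div_eq]
  generalize (∏ j ∈ univ.erase a,
    (Complex.exp (Complex.I * l a) ^ 2 - Complex.exp (Complex.I * l j) ^ 2)) = D
  generalize Complex.exp (Complex.I * l a) = x at *
  by_cases hD : D = 0
  · simp [hD]
  field_simp

/-- The identity for complex parameters, with `p` and `q` in place of `μ_k ± iζ`. -/
lemma sin_kernel_sum (N : ℕ) (l m : Fin N → ℂ)
    (hl : ∀ a b, a ≠ b → Complex.sin (l a - l b) ≠ 0) (p q : ℂ)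
    (hp : ∀ a, Complex.sin (p - l a) ≠ 0) (hq : ∀ a, Complex.sin (q - l a) ≠ 0) :
    ∑ a, Complex.sin (p - q) / (Complex.sin (p - l a) * Complex.sin (q - l a)) *
        ((∏ j, Complex.sin (l a - m j)) / ∏ j ∈ univ.erase a, Complex.sin (l a - l j)) =
      (∏ j, Complex.sin (q - m j) / Complex.sin (q - l j)) -
        ∏ j, Complex.sin (p - m j) / Complex.sin (p - l j) := by
  have key : ∀ x y : ℂ, Complex.sin (x - y) ≠ 0 →
      Complex.exp (Complex.I * x) ^ 2 ≠ Complex.exp (Complex.I * y) ^ 2 := by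
    intro x y h h'
    apply h
    rw [sin_sub_eq, h', sub_self, zero_div]
  have hinj : Function.Injective fun a => Complex.exp (Complex.I * l a) ^ 2 := by
    intro a b hab
    by_contra hne
    exact key _ _ (hl a b hne) hab
  rw [sin_quotient, sin_quotient,
    partial_fraction N _ (fun j => Complex.exp (Complex.I * m j) ^ 2) hinj _
      fun a => key _ _ (hp a),
    partial_fraction N _ (fun j => Complex.exp (Complex.I * m j) ^ 2) hinj _
      fun a => key _ _ (hq a), ← mul_sub, add_sub_add_left_eq_sub, ← sum_sub_distrib, mul_sum]
  refine sum_congr rfl fun a _ => ?_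
  rw [sin_residue, sin_sub_eq p q, sin_sub_eq p, sin_sub_eq q]
  have h1 := sub_ne_zero.2 (key _ _ (hp a))
  have h2 := sub_ne_zero.2 (key _ _ (hq a))
  have e1 := Complex.exp_ne_zero (Complex.I * p)
  have e2 := Complex.exp_ne_zero (Complex.I * q)
  have e3 := Complex.exp_ne_zero (Complex.I * l a)
  have hI := Complex.I_ne_zero
  generalize (∏ j, Complex.exp (Complex.I * l j) / Complex.exp (Complex.I * m j)) = c
  generalize (∏ j, (Complex.exp (Complex.I * l a) ^ 2 - Complex.exp (Complex.I * m j) ^ 2)) /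
    (∏ j ∈ univ.erase a,
      (Complex.exp (Complex.I * l a) ^ 2 - Complex.exp (Complex.I * l j) ^ 2)) = R
  generalize Complex.exp (Complex.I * p) = x at *
  generalize Complex.exp (Complex.I * q) = y at *
  generalize Complex.exp (Complex.I * l a) = t at *
  field_simp
  ring

lemma sin_ofReal_add_ne_zero (x ζ : ℝ) (hζ : ζ ≠ 0) : Complex.sin (x + Complex.I * ζ) ≠ 0 := by
  rw [Complex.sin_ne_zero_iff]
  intro n h
  apply hζ
  simpa using congrArg Complex.im h

/-- summing the two identities (A.1) gives the kernel form (3.8). -/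
theorem stmt_1 (N : ℕ) (hN : 0 < N) (ζ : ℝ) (hζ : 0 < ζ)
    (lam mu : Fin N → ℝ)
    (hlam : ∀ a b : Fin N, a ≠ b → ∀ n : ℤ, lam a - lam b ≠ n * Real.pi)
    (hmulam : ∀ k a : Fin N, ∀ n : ℤ, mu k - lam a ≠ n * Real.pi)
    (K : ℝ → ℂ)
    (hK : ∀ x : ℝ, K x = Complex.sinh (2 * ζ) /
      (2 * Real.pi * Complex.sin ((x : ℂ) + Complex.I * ζ) *
        Complex.sin ((x : ℂ) - Complex.I * ζ)))
    (k : Fin N) :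
    ∑ a : Fin N,
      2 * Real.pi * K (mu k - lam a) *
        ((∏ m : Fin N, Complex.sin ((lam a : ℂ) - (mu m : ℂ))) /
          ∏ m ∈ univ.erase a, Complex.sin ((lam a : ℂ) - (lam m : ℂ))) =
    Complex.I *
      ((∏ m : Fin N,
          Complex.sin ((mu k : ℂ) - (mu m : ℂ) + Complex.I * ζ) /
            Complex.sin ((mu k : ℂ) - (lam m : ℂ) + Complex.I * ζ)) -
        ∏ m : Fin N,
          Complex.sin ((mu k : ℂ) - (mu m : ℂ) - Complex.I * ζ) /
            Complex.sin ((mu k : ℂ) - (lam m : ℂ) - Complex.I * ζ)) := by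
  have hS := sin_kernel_sum N (fun a => (lam a : ℂ)) (fun a => (mu a : ℂ))
    (fun a b hab h => by
      obtain ⟨n, hn⟩ := Complex.sin_eq_zero_iff.1 h
      exact hlam a b hab n (by exact_mod_cast hn))
    (mu k + Complex.I * ζ) (mu k - Complex.I * ζ)
    (fun a => by
      have h := sin_ofReal_add_ne_zero (mu k - lam a) ζ hζ.ne'
      rwa [Complex.ofReal_sub, sub_add_eq_add_sub] at h)
    (fun a => by
      have h := sin_ofReal_add_ne_zero (mu k - lam a) (-ζ) (neg_ne_zero.2 hζ.ne')
      rwa [Complex.ofReal_sub, Complex.ofReal_neg, mul_neg, ← sub_eq_add_neg,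
        sub_right_comm] at h)
  have hsin : Complex.sin ((mu k + Complex.I * ζ) - (mu k - Complex.I * ζ)) =
      Complex.I * Complex.sinh (2 * ζ) := by
    rw [show ((mu k : ℂ) + Complex.I * ζ) - (mu k - Complex.I * ζ) = 2 * ζ * Complex.I by ring,
      Complex.sin_mul_I, mul_comm]
  rw [hsin] at hS
  simp only [sub_add_eq_add_sub, sub_right_comm _ _ (Complex.I * (ζ : ℂ))]
  rw [← neg_sub, ← hS, mul_neg, mul_sum, ← sum_neg_distrib]
  refine sum_congr rfl fun a _ => ?_
  have hpi : (Real.pi : ℂ) ≠ 0 := by exact_mod_cast Real.pi_ne_zero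
  rw [hK, Complex.ofReal_sub, sub_add_eq_add_sub, sub_right_comm, ← mul_assoc, ← neg_mul]
  congr 1
  rw [mul_assoc (2 * (Real.pi : ℂ)), ← mul_div_assoc,
    mul_div_mul_left _ _ (mul_ne_zero two_ne_zero hpi), ← mul_div_assoc, ← mul_assoc,
    Complex.I_mul_I]
  ring
end

section
/- Let X, Φ^+, Φ^− and S = Φ^+ + Φ^− be the N×N complex matrices with entries X_{ab} = [e^{i(λ_a−μ_b)}/sin(λ_a−μ_b)]·[∏_{k=1}^{N} sin(μ_b−λ_k)]/[∏_{k≠b} sin(μ_b−μ_k)] and Φ^±_{ab} = [sinh ζ/(sin(λ_b−μ_a)·sin(λ_b−μ_a±iζ))]·∏_{k=1}^{N} sin(λ_b−μ_k±iζ)/sin(λ_b−λ_k±iζ). Then for all a,b ∈ {1,…,N}: (X·S)_{ab} = −2π·K(λ_a−λ_b) + i·δ_{ab}·[∏_{k≠a} sin(λ_a−λ_k)]/[∏_{k=1}^{N} sin(λ_a−μ_k)] · ( ∏_{k=1}^{N} sin(λ_a−μ_k+iζ)/sin(λ_a−λ_k+iζ) − ∏_{k=1}^{N} sin(λ_a−μ_k−iζ)/sin(λ_a−λ_k−iζ)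 ), where δ_{ab} is the Kronecker delta. -/
/-!
For fixed `a, b` and `η = ±iζ`, the sum over `c` in `∑ c, X a c * Φ± c b` runs over the residues at
`x = μ_c` of the `π`-periodic function
`exp (i(λ_a - x)) ∏_{k ≠ a} sin (x - λ_k) / (∏_k sin (x - μ_k) · sin (x - λ_b) · sin (x - λ_b - η))`,
up to a factor independent of `x`. This function decays at `± i∞`, so the sum of all its residues in
a period strip vanishes (`sum_trig_residues`), and the wanted sum is minus the contributions of the
two other poles. The pole `x = λ_b` is cancelled by the numerator unless `a = b`, which gives the
Kronecker delta term. At `x = λ_b + η` all products cancel and only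
`exp (i(λ_a - λ_b - η)) / sin (λ_a - λ_b - η)` survives (`half_product`); adding the contributions of
the two signs turns `exp (iy) / sin y = cot y + i` into a difference of cotangents, which is the
kernel `K` (`far_residues`).

No complex analysis is needed: in the variable `w = exp (2ix)` the vanishing of the residue sum is
the formula for the top coefficient of a Lagrange interpolant, `Lagrange.coeff_eq_sum`.
-/

open Finset

theorem sin_sub_eq_exp_s4 (x y : ℂ) :
    Complex.sin (x - y) = (Complex.exp (2 * Complex.I * x) - Complex.exp (2 * Complex.I * y)) *
      (Complex.exp (-(Complex.I * x)) * ((2 * Complex.I)⁻¹ * Complex.exp (-(Complex.I * y)))) := by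
  have h1 : Complex.exp (2 * Complex.I * x) * (Complex.exp (-(Complex.I * x)) *
      Complex.exp (-(Complex.I * y))) = Complex.exp ((x - y) * Complex.I) := by
    rw [← Complex.exp_add, ← Complex.exp_add]; ring_nf
  have h2 : Complex.exp (2 * Complex.I * y) * (Complex.exp (-(Complex.I * x)) *
      Complex.exp (-(Complex.I * y))) = Complex.exp (-(x - y) * Complex.I) := by
    rw [← Complex.exp_add, ← Complex.exp_add]; ring_nf
  have hI : (2 * Complex.I)⁻¹ = -Complex.I / 2 := by
    rw [mul_inv, Complex.inv_I]; ring
  rw [Complex.sin, ← h1, ← h2, hI]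
  ring

/-- The residues of a trigonometric rational function with simple poles at the `u i`, decaying at
`± i∞`, add up to zero. In the variable `w = exp (2ix)` the factor `exp (-ix)` makes the numerator
a polynomial in `w` of degree `#K`, two less than the degree at which the top coefficient of its
Lagrange interpolant on the nodes `exp (2 i u_j)` would be seen. -/
theorem sum_trig_residues {ι κ : Type*} [Fintype ι] [DecidableEq ι] (u : ι → ℂ)
    (hu : ∀ i j, i ≠ j → Complex.sin (u i - u j) ≠ 0) (K : Finset κ) (v : κ → ℂ)
    (hcard : #K + 3 = Fintype.card ι) :
    ∑ i, Complex.exp (-(Complex.I * u i)) * (∏ k ∈ K, Complex.sin (u i - v k)) /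
      ∏ j ∈ univ.erase i, Complex.sin (u i - u j) = 0 := by
  set w : ℂ → ℂ := fun x => Complex.exp (2 * Complex.I * x) with hw
  set e : ℂ → ℂ := fun x => Complex.exp (-(Complex.I * x)) with he
  set c : ℂ := (2 * Complex.I)⁻¹ with hc
  have hc0 : c ≠ 0 := by simp [hc]
  have he0 : ∀ x, e x ≠ 0 := fun x => Complex.exp_ne_zero _
  have hsin : ∀ x y, Complex.sin (x - y) = (w x - w y) * (e x * (c * e y)) := sin_sub_eq_exp_s4
  have hinj : Set.InjOn (fun i => w (u i)) (univ : Finset ι) := by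
    intro i _ j _ hij
    by_contra hne
    apply hu i j hne
    have hij' : w (u i) = w (u j) := hij
    rw [hsin, hij', sub_self, zero_mul]
  have hdeg : (Lagrange.nodal K (fun k => w (v k))).degree < (#(univ : Finset ι) : ℕ) := by
    rw [Lagrange.degree_nodal, card_univ]
    exact_mod_cast (by omega : #K < Fintype.card ι)
  have hL := Lagrange.coeff_eq_sum hinj hdeg
  rw [Polynomial.coeff_eq_zero_of_natDegree_lt
    (by rw [Lagrange.natDegree_nodal, card_univ]; omega)] at hL
  have hA : ∏ j, (c * e (u j)) ≠ 0 :=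
    prod_ne_zero_iff.mpr fun j _ => mul_ne_zero hc0 (he0 _)
  have hterm : ∀ i, e (u i) * (∏ k ∈ K, Complex.sin (u i - v k)) /
      ∏ j ∈ univ.erase i, Complex.sin (u i - u j) =
      (c * (∏ k ∈ K, (c * e (v k))) / ∏ j, (c * e (u j))) *
        (Polynomial.eval (w (u i)) (Lagrange.nodal K (fun k => w (v k))) /
          ∏ j ∈ univ.erase i, (w (u i) - w (u j))) := by
    intro i
    have hc1 : #((univ : Finset ι).erase i) = #K + 2 := by
      rw [card_erase_of_mem (mem_univ i), card_univ]; omega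
    have hne : ∏ j ∈ univ.erase i, (c * e (u j)) ≠ 0 :=
      prod_ne_zero_iff.mpr fun j _ => mul_ne_zero hc0 (he0 _)
    have hw0 : ∏ j ∈ univ.erase i, (w (u i) - w (u j)) ≠ 0 := by
      refine prod_ne_zero_iff.mpr fun j hj h => ?_
      exact (ne_of_mem_erase hj).symm (hinj (by simp) (by simp) (sub_eq_zero.mp h))
    rw [Lagrange.eval_nodal, ← mul_prod_erase univ (fun j => c * e (u j)) (mem_univ i)]
    simp only [hsin, prod_mul_distrib (f := fun j => w (u i) - w _),
      prod_mul_distrib (f := fun _ => e (u i)), prod_const, hc1]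
    have hei := he0 (u i)
    generalize e (u i) = t at *
    generalize ∏ j ∈ univ.erase i, (c * e (u j)) = A at *
    generalize ∏ j ∈ univ.erase i, (w (u i) - w (u j)) = W at *
    field_simp
    ring
  calc _ = ∑ i, (c * (∏ k ∈ K, (c * e (v k))) / ∏ j, (c * e (u j))) *
        (Polynomial.eval (w (u i)) (Lagrange.nodal K (fun k => w (v k))) /
          ∏ j ∈ univ.erase i, (w (u i) - w (u j))) := sum_congr rfl fun i _ => hterm i
    _ = 0 := by rw [← mul_sum, ← hL, mul_zero]

/-- `sum_trig_residues` at the nodes `m 1, …, m N, y, y + η`. -/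
theorem sum_residues_two_extra {N : ℕ} (l m : Fin N → ℂ) (y η : ℂ) (a : Fin N)
    (hη : Complex.sin η ≠ 0)
    (hm : ∀ i j, i ≠ j → Complex.sin (m i - m j) ≠ 0)
    (hy : ∀ c, Complex.sin (y - m c) ≠ 0)
    (hyη : ∀ c, Complex.sin (y - m c + η) ≠ 0) :
    (∑ c, Complex.exp (-(Complex.I * m c)) * (∏ k ∈ univ.erase a, Complex.sin (m c - l k)) /
        (Complex.sin (y - m c) * Complex.sin (y - m c + η) *
          ∏ k ∈ univ.erase c, Complex.sin (m c - m k))) =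
      Complex.exp (-(Complex.I * y)) * (∏ k ∈ univ.erase a, Complex.sin (y - l k)) /
        (Complex.sin η * ∏ k, Complex.sin (y - m k)) -
      Complex.exp (-(Complex.I * (y + η))) *
        (∏ k ∈ univ.erase a, Complex.sin (y - l k + η)) /
        (Complex.sin η * ∏ k, Complex.sin (y - m k + η)) := by
  have hneg : ∀ x z : ℂ, Complex.sin (x - z) = -Complex.sin (z - x) := fun x z => by
    rw [← Complex.sin_neg]; ring_nf
  have herase : ∀ {ι : Type} [Fintype ι] [DecidableEq ι] (i : ι) (f : ι → ℂ),
      ∏ j ∈ univ.erase i, f j = ∏ j, if j = i then 1 else f j := by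
    intro ι _ _ i f
    rw [← mul_prod_erase univ (fun j => if j = i then (1 : ℂ) else f j) (mem_univ i)]
    simp only [if_true, one_mul]
    exact prod_congr rfl fun j hj => by rw [if_neg (ne_of_mem_erase hj)]
  let u : Option (Option (Fin N)) → ℂ
    | none => y + η
    | some none => y
    | some (some c) => m c
  have hs1 : ∀ z, y + η - z = y - z + η := fun z => by ring
  have hs2 : ∀ z, Complex.sin (z - (y + η)) = - Complex.sin (y - z + η) := fun z => by
    rw [hneg, hs1]
  have hu : ∀ i j, i ≠ j → Complex.sin (u i - u j) ≠ 0 := by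
    rintro (_ | _ | i) (_ | _ | j) hij
    · exact absurd rfl hij
    · simpa [u] using hη
    · simpa [u, hs1] using hyη j
    · simpa [u] using hη
    · exact absurd rfl hij
    · exact hy j
    · simpa [u, hs2] using hyη i
    · simpa [u, hneg _ y] using hy i
    · exact hm i j fun h => hij (by rw [h])
  have hcard : #((univ : Finset (Fin N)).erase a) + 3 =
      Fintype.card (Option (Option (Fin N))) := by
    have := a.pos
    rw [card_erase_of_mem (mem_univ a)]
    simp
    omega
  have h := sum_trig_residues u hu (univ.erase a) l hcard
  simp only [herase, Fintype.sum_option, Fintype.prod_option, u, Option.some.injEq, reduceCtorEq,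
    if_true, if_false, one_mul] at h
  simp only [herase]
  have h1 : y + η - y = η := by ring
  have h2 : y - (y + η) = -η := by ring
  simp only [h1, h2, hs2, hs1, hneg _ y, Complex.sin_neg, neg_mul_neg, ← mul_assoc] at h
  simp only [neg_mul, div_neg] at h
  simp only [mul_comm (Complex.sin (y - _)) (Complex.sin (y - _ + η))]
  linear_combination h

/-- One half (`η = iζ` or `η = -iζ`, up to the factor `sinh ζ`) of the entry `(X·S) a b`. The first term
on the right comes from the residue at `l b + η`, the second from the one at `l b`, which vanishes
for `a ≠ b` because the numerator then has the factor `sin (l b - l b)`. -/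
theorem half_product {N : ℕ} (l m : Fin N → ℂ) (η : ℂ) (a b : Fin N)
    (hη : Complex.sin η ≠ 0)
    (hm : ∀ i j, i ≠ j → Complex.sin (m i - m j) ≠ 0)
    (hc : ∀ i c, Complex.sin (l i - m c) ≠ 0)
    (hcη : ∀ c, Complex.sin (l b - m c + η) ≠ 0)
    (hlη : ∀ k, Complex.sin (l b - l k + η) ≠ 0) :
    ∑ c, (Complex.exp (Complex.I * (l a - m c)) / Complex.sin (l a - m c) *
        ((∏ k, Complex.sin (m c - l k)) / ∏ k ∈ univ.erase c, Complex.sin (m c - m k))) *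
        (1 / (Complex.sin (l b - m c) * Complex.sin (l b - m c + η)) *
          ∏ k, Complex.sin (l b - m k + η) / Complex.sin (l b - l k + η)) =
      1 / Complex.sin η * (Complex.exp (Complex.I * (l a - l b - η)) /
        Complex.sin (l b - l a + η)) -
      1 / Complex.sin η * (if a = b then 1 else 0) *
        ((∏ k ∈ univ.erase a, Complex.sin (l a - l k)) / ∏ k, Complex.sin (l a - m k)) *
        ∏ k, Complex.sin (l a - m k + η) / Complex.sin (l a - l k + η) := by
  have hres := sum_residues_two_extra l m (l b) η a hη hm (hc b) hcη
  set P := ∏ k, Complex.sin (l b - m k + η) / Complex.sin (l b - l k + η) with hP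
  have hterm : ∀ c, (Complex.exp (Complex.I * (l a - m c)) / Complex.sin (l a - m c) *
        ((∏ k, Complex.sin (m c - l k)) / ∏ k ∈ univ.erase c, Complex.sin (m c - m k))) *
        (1 / (Complex.sin (l b - m c) * Complex.sin (l b - m c + η)) * P) =
      (-Complex.exp (Complex.I * l a) * P) * (Complex.exp (-(Complex.I * m c)) *
        (∏ k ∈ univ.erase a, Complex.sin (m c - l k)) /
        (Complex.sin (l b - m c) * Complex.sin (l b - m c + η) *
          ∏ k ∈ univ.erase c, Complex.sin (m c - m k))) := by
    intro c
    have hE : Complex.exp (Complex.I * (l a - m c)) =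
        Complex.exp (Complex.I * l a) * Complex.exp (-(Complex.I * m c)) := by
      rw [← Complex.exp_add]; ring_nf
    have hn : Complex.sin (m c - l a) = -Complex.sin (l a - m c) := by
      rw [← Complex.sin_neg]; ring_nf
    have hD : ∏ k ∈ univ.erase c, Complex.sin (m c - m k) ≠ 0 :=
      prod_ne_zero_iff.mpr fun k hk => hm c k (ne_of_mem_erase hk).symm
    have h1 := hc a c
    have h2 := hc b c
    have h3 := hcη c
    rw [← mul_prod_erase univ (fun k => Complex.sin (m c - l k)) (mem_univ a), hE]
    simp only [hn]
    field_simp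
  rw [sum_congr rfl fun c _ => hterm c, ← mul_sum, hres, mul_sub]
  have hPη : ∏ k, Complex.sin (l b - m k + η) ≠ 0 := prod_ne_zero_iff.mpr fun k _ => hcη k
  have hQη : ∏ k ∈ univ.erase a, Complex.sin (l b - l k + η) ≠ 0 :=
    prod_ne_zero_iff.mpr fun k _ => hlη k
  have hla := hlη a
  have hfar : -Complex.exp (Complex.I * l a) * P * (Complex.exp (-(Complex.I * (l b + η))) *
        (∏ k ∈ univ.erase a, Complex.sin (l b - l k + η)) /
        (Complex.sin η * ∏ k, Complex.sin (l b - m k + η))) =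
      -(1 / Complex.sin η * (Complex.exp (Complex.I * (l a - l b - η)) /
        Complex.sin (l b - l a + η))) := by
    have hE : Complex.exp (Complex.I * (l a - l b - η)) =
        Complex.exp (Complex.I * l a) * Complex.exp (-(Complex.I * (l b + η))) := by
      rw [← Complex.exp_add]; ring_nf
    rw [hE, hP, prod_div_distrib,
      ← mul_prod_erase univ (fun k => Complex.sin (l b - l k + η)) (mem_univ a)]
    field_simp
  have hnear : -Complex.exp (Complex.I * l a) * P * (Complex.exp (-(Complex.I * l b)) *
        (∏ k ∈ univ.erase a, Complex.sin (l b - l k)) /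
        (Complex.sin η * ∏ k, Complex.sin (l b - m k))) =
      -(1 / Complex.sin η * (if a = b then 1 else 0) *
        ((∏ k ∈ univ.erase a, Complex.sin (l a - l k)) / ∏ k, Complex.sin (l a - m k)) *
        ∏ k, Complex.sin (l a - m k + η) / Complex.sin (l a - l k + η)) := by
    by_cases hab : a = b
    · subst hab
      have hE : Complex.exp (Complex.I * l a) * Complex.exp (-(Complex.I * l a)) = 1 := by
        rw [← Complex.exp_add, add_neg_cancel, Complex.exp_zero]
      rw [← hP, if_pos rfl]
      generalize Complex.sin η = s
      rw [div_eq_mul_inv, div_eq_mul_inv, div_eq_mul_inv, mul_inv]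
      linear_combination (-P * (∏ k ∈ univ.erase a, Complex.sin (l a - l k)) * s⁻¹ *
        (∏ k, Complex.sin (l a - m k))⁻¹) * hE
    · have h0 : ∏ k ∈ univ.erase a, Complex.sin (l b - l k) = 0 :=
        prod_eq_zero (mem_erase.mpr ⟨Ne.symm hab, mem_univ b⟩) (by simp)
      rw [h0, if_neg hab]
      simp
  rw [hfar, hnear]
  ring

theorem sin_ofReal_ne_zero {x : ℝ} (hx : ∀ n : ℤ, x ≠ n * Real.pi) : Complex.sin (x : ℂ) ≠ 0 := by
  rw [← Complex.ofReal_sin, Complex.ofReal_ne_zero]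
  exact Real.sin_ne_zero_iff.mpr fun n => (hx n).symm

theorem sin_ofReal_add_I_mul_ne_zero (x : ℝ) {t : ℝ} (ht : t ≠ 0) :
    Complex.sin ((x : ℂ) + Complex.I * t) ≠ 0 := by
  intro h
  obtain ⟨n, hn⟩ := Complex.sin_eq_zero_iff.mp h
  have := congrArg Complex.im hn
  simp [ht] at this

/-- The two residues at `l b ± iζ` combine to the kernel: `cot (x - iζ) - cot (x + iζ)` with the
constant `i` of `exp (iy) / sin y = cot y + i` cancelling. -/
theorem far_residues (x z : ℂ) (hp : Complex.sin (x + Complex.I * z) ≠ 0)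
    (hm : Complex.sin (x - Complex.I * z) ≠ 0) :
    Complex.I * (Complex.exp (Complex.I * (x - Complex.I * z)) / Complex.sin (x - Complex.I * z)) -
      Complex.I * (Complex.exp (Complex.I * (x + Complex.I * z)) / Complex.sin (x + Complex.I * z))
      = -(Complex.sinh (2 * z) /
        (Complex.sin (x + Complex.I * z) * Complex.sin (x - Complex.I * z))) := by
  have hE : ∀ y, Complex.exp (Complex.I * y) = Complex.cos y + Complex.sin y * Complex.I :=
    fun y => by rw [mul_comm, Complex.exp_mul_I]
  have hs : Complex.sinh (2 * z) * Complex.I =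
      Complex.sin (x + Complex.I * z) * Complex.cos (x - Complex.I * z) -
      Complex.cos (x + Complex.I * z) * Complex.sin (x - Complex.I * z) := by
    rw [← Complex.sin_sub, ← Complex.sin_mul_I]; ring_nf
  rw [hE, hE]
  generalize Complex.sinh (2 * z) = s at hs ⊢
  field_simp
  linear_combination (-Complex.I) * hs + s * Complex.I_sq

/-- the entries of the matrix product `X·S` (equation (2.10)). -/
theorem stmt_4 (N : ℕ) (hN : 0 < N) (ζ : ℝ) (hζ : 0 < ζ)
    (lam mu : Fin N → ℝ)
    (hlam : ∀ a b : Fin N, a ≠ b → ∀ n : ℤ, lam a - lam b ≠ n * Real.pi)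
    (hmu : ∀ a b : Fin N, a ≠ b → ∀ n : ℤ, mu a - mu b ≠ n * Real.pi)
    (hcross : ∀ a b : Fin N, ∀ n : ℤ, lam a - mu b ≠ n * Real.pi)
    (X S : Matrix (Fin N) (Fin N) ℂ)
    (hX : ∀ a b : Fin N, X a b =
      Complex.exp (Complex.I * ((lam a : ℂ) - (mu b : ℂ))) /
          Complex.sin ((lam a : ℂ) - (mu b : ℂ)) *
        ((∏ k : Fin N, Complex.sin ((mu b : ℂ) - (lam k : ℂ))) /
          ∏ k ∈ univ.erase b, Complex.sin ((mu b : ℂ) - (mu k : ℂ))))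
    (hS : ∀ a b : Fin N, S a b =
      (Complex.sinh ζ /
          (Complex.sin ((lam b : ℂ) - (mu a : ℂ)) *
            Complex.sin ((lam b : ℂ) - (mu a : ℂ) + Complex.I * ζ)) *
        ∏ k : Fin N,
          Complex.sin ((lam b : ℂ) - (mu k : ℂ) + Complex.I * ζ) /
            Complex.sin ((lam b : ℂ) - (lam k : ℂ) + Complex.I * ζ)) +
      (Complex.sinh ζ /
          (Complex.sin ((lam b : ℂ) - (mu a : ℂ)) *
            Complex.sin ((lam b : ℂ) - (mu a : ℂ) - Complex.I * ζ)) *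
        ∏ k : Fin N,
          Complex.sin ((lam b : ℂ) - (mu k : ℂ) - Complex.I * ζ) /
            Complex.sin ((lam b : ℂ) - (lam k : ℂ) - Complex.I * ζ)))
    (K : ℝ → ℂ)
    (hK : ∀ x : ℝ, K x = Complex.sinh (2 * ζ) /
      (2 * Real.pi * Complex.sin ((x : ℂ) + Complex.I * ζ) *
        Complex.sin ((x : ℂ) - Complex.I * ζ))) :
    ∀ a b : Fin N,
      (X * S) a b =
        -(2 * Real.pi) * K (lam a - lam b) +
          Complex.I * (if a = b then 1 else 0) *
            ((∏ k ∈ univ.erase a, Complex.sin ((lam a : ℂ) - (lam k : ℂ))) /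
              ∏ k : Fin N, Complex.sin ((lam a : ℂ) - (mu k : ℂ))) *
            ((∏ k : Fin N,
                Complex.sin ((lam a : ℂ) - (mu k : ℂ) + Complex.I * ζ) /
                  Complex.sin ((lam a : ℂ) - (lam k : ℂ) + Complex.I * ζ)) -
              ∏ k : Fin N,
                Complex.sin ((lam a : ℂ) - (mu k : ℂ) - Complex.I * ζ) /
                  Complex.sin ((lam a : ℂ) - (lam k : ℂ) - Complex.I * ζ)) := by
  intro a b
  have hζ0 : ζ ≠ 0 := hζ.ne'
  have hsh : Complex.sinh (ζ : ℂ) ≠ 0 := by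
    rw [← Complex.ofReal_sinh, Complex.ofReal_ne_zero]
    exact (Real.sinh_pos_iff.mpr hζ).ne'
  have hsI : Complex.sin (Complex.I * ζ) = Complex.sinh ζ * Complex.I := by
    rw [mul_comm, Complex.sin_mul_I]
  have hplus : ∀ x y : ℝ, Complex.sin ((x : ℂ) - y + Complex.I * ζ) ≠ 0 := fun x y => by
    simpa using sin_ofReal_add_I_mul_ne_zero (x - y) hζ0
  have hminus : ∀ x y : ℝ, Complex.sin ((x : ℂ) - y - Complex.I * ζ) ≠ 0 := fun x y => by
    simpa [sub_eq_add_neg] using sin_ofReal_add_I_mul_ne_zero (x - y) (neg_ne_zero.mpr hζ0)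
  have hm : ∀ i j, i ≠ j → Complex.sin ((mu i : ℂ) - mu j) ≠ 0 := fun i j hij => by
    simpa using sin_ofReal_ne_zero (hmu i j hij)
  have hc : ∀ i c, Complex.sin ((lam i : ℂ) - mu c) ≠ 0 := fun i c => by
    simpa using sin_ofReal_ne_zero (hcross i c)
  have h1 := half_product (fun i => (lam i : ℂ)) (fun i => (mu i : ℂ)) (Complex.I * ζ) a b
    (by rw [hsI]; exact mul_ne_zero hsh Complex.I_ne_zero) hm hc
    (fun c => hplus _ _) (fun c => hplus _ _)
  have h2 := half_product (fun i => (lam i : ℂ)) (fun i => (mu i : ℂ)) (-(Complex.I * ζ)) a b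
    (by rw [Complex.sin_neg, hsI]; exact neg_ne_zero.mpr (mul_ne_zero hsh Complex.I_ne_zero)) hm hc
    (fun c => by simpa [sub_eq_add_neg] using hminus (lam b) (mu c))
    (fun c => by simpa [sub_eq_add_neg] using hminus (lam b) (lam c))
  simp only [Complex.sin_neg, ← sub_eq_add_neg, sub_neg_eq_add] at h1 h2
  have hXS := Eq.trans (a := (X * S) a b) (by
    rw [Matrix.mul_apply, ← sum_add_distrib, mul_sum]
    refine sum_congr rfl fun c _ => ?_
    rw [hX, hS]
    ring) (congrArg₂ (fun p q => Complex.sinh ζ * (p + q)) h1 h2)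
  have hcoef : Complex.sinh ζ * (1 / Complex.sin (Complex.I * ζ)) = -Complex.I := by
    rw [hsI, ← Complex.inv_I]
    field_simp
  have hfar := far_residues ((lam a : ℂ) - lam b) ζ (hplus _ _) (hminus _ _)
  have hn1 : Complex.sin ((lam b : ℂ) - lam a + Complex.I * ζ) =
      -Complex.sin ((lam a : ℂ) - lam b - Complex.I * ζ) := by
    rw [← Complex.sin_neg]; ring_nf
  have hn2 : Complex.sin ((lam b : ℂ) - lam a - Complex.I * ζ) =
      -Complex.sin ((lam a : ℂ) - lam b + Complex.I * ζ) := by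
    rw [← Complex.sin_neg]; ring_nf
  have hker : -(2 * (Real.pi : ℂ)) * K (lam a - lam b) = -(Complex.sinh (2 * ζ) /
      (Complex.sin ((lam a : ℂ) - lam b + Complex.I * ζ) *
        Complex.sin ((lam a : ℂ) - lam b - Complex.I * ζ))) := by
    have hpi : (Real.pi : ℂ) ≠ 0 := Complex.ofReal_ne_zero.mpr Real.pi_ne_zero
    have hp := hplus (lam a) (lam b)
    have hq := hminus (lam a) (lam b)
    rw [hK, Complex.ofReal_sub]
    field_simp
  rw [hXS, hker, ← hfar, hn1, hn2]
  simp only [div_neg]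
  generalize (∏ k ∈ univ.erase a, Complex.sin ((lam a : ℂ) - (lam k : ℂ))) /
              ∏ k : Fin N, Complex.sin ((lam a : ℂ) - (mu k : ℂ)) = D
  generalize (∏ k : Fin N, Complex.sin ((lam a : ℂ) - (mu k : ℂ) + Complex.I * ζ) /
                  Complex.sin ((lam a : ℂ) - (lam k : ℂ) + Complex.I * ζ)) = A
  generalize (∏ k : Fin N, Complex.sin ((lam a : ℂ) - (mu k : ℂ) - Complex.I * ζ) /
                  Complex.sin ((lam a : ℂ) - (lam k : ℂ) - Complex.I * ζ)) = B
  generalize Complex.exp (Complex.I * ((lam a : ℂ) - lam b - Complex.I * ζ)) /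
    Complex.sin ((lam a : ℂ) - lam b - Complex.I * ζ) = U
  generalize Complex.exp (Complex.I * ((lam a : ℂ) - lam b + Complex.I * ζ)) /
    Complex.sin ((lam a : ℂ) - lam b + Complex.I * ζ) = V
  linear_combination (V - U + (if a = b then 1 else 0) * D * (B - A)) * hcoef
end

section
/- For every integer n ∈ ℤ: ∫_{−π/2}^{π/2} K(λ)·e^{2inλ} dλ = e^{−2ζ|n|}, where K(λ) = sinh(2ζ)/(2π·sin(λ+iζ)·sin(λ−iζ)). -/
/-!
Put `q = e^{-2ζ}`. On the unit circle, at `z = e^{2iλ}`, the Poisson kernel of the disk with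
respect to the point `q` equals `(1 - q²) / |z - q|² = π K(λ)`, because
`sin(λ+iζ) sin(λ-iζ) = sin²λ + sinh²ζ` and `|z - q|² = 4q (sin²λ + sinh²ζ)`.
Hence for `n ≥ 0` the integral is the Poisson integral of the holomorphic function `z ↦ zⁿ`,
whose value at `q` is `qⁿ = e^{-2ζn}`. The case `n < 0` follows from `K` being even.
-/

lemma kernel_denominator (ζ x : ℝ) :
    Complex.sin ((x : ℂ) + Complex.I * ζ) * Complex.sin ((x : ℂ) - Complex.I * ζ) =
      ((Real.sin x ^ 2 + Real.sinh ζ ^ 2 : ℝ) : ℂ) := by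
  rw [mul_comm Complex.I, Complex.sin_add, Complex.sin_sub, Complex.sin_mul_I, Complex.cos_mul_I]
  push_cast
  have h1 := Complex.sin_sq_add_cos_sq (x : ℂ)
  have h2 := Complex.cosh_sq (ζ : ℂ)
  linear_combination (-Complex.cos x ^ 2 * Complex.sinh ζ ^ 2) * Complex.I_sq +
    Complex.sin x ^ 2 * h2 + Complex.sinh ζ ^ 2 * h1

/-- At `z = e^{2ix}` the kernel `K(x)` is `π⁻¹` times the Poisson kernel of the unit disk with respect
to `e^{-2ζ}`. -/
lemma kernel_eq_poissonKernel (ζ : ℝ) (hζ : 0 < ζ) (x : ℝ) :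
    Complex.sinh (2 * ζ) /
          (2 * Real.pi * Complex.sin ((x : ℂ) + Complex.I * ζ) *
            Complex.sin ((x : ℂ) - Complex.I * ζ)) =
      (Real.pi : ℂ)⁻¹ *
        (poissonKernel 0 (Real.exp (-2 * ζ) : ℂ) (circleMap 0 1 (2 * x)) : ℂ) := by
  have hq : 0 < Real.exp (-2 * ζ) := Real.exp_pos _
  have hs : 0 < Real.sinh ζ := Real.sinh_pos_iff.2 hζ
  have hD : 0 < Real.sin x ^ 2 + Real.sinh ζ ^ 2 := by positivity
  have hinv : Real.exp (-2 * ζ) * Real.exp (2 * ζ) = 1 := by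
    rw [← Real.exp_add]; simp
  have hE2 : Real.exp (2 * ζ) = Real.exp ζ ^ 2 := by rw [← Real.exp_nat_mul]; norm_num
  have hE3 : Real.exp (-2 * ζ) = Real.exp (-ζ) ^ 2 := by
    rw [← Real.exp_nat_mul]; congr 1; push_cast; ring
  have hE4 : Real.exp ζ * Real.exp (-ζ) = 1 := by rw [← Real.exp_add]; simp
  have hnum : 1 - Real.exp (-2 * ζ) ^ 2 = 2 * Real.exp (-2 * ζ) * Real.sinh (2 * ζ) := by
    rw [Real.sinh_eq, ← neg_mul]
    linear_combination -hinv
  have hsq : 4 * Real.exp (-2 * ζ) * Real.sinh ζ ^ 2 = (1 - Real.exp (-2 * ζ)) ^ 2 := by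
    rw [Real.sinh_eq, hE3]
    linear_combination (Real.exp ζ * Real.exp (-ζ) + 1 - 2 * Real.exp (-ζ) ^ 2) * hE4
  have hden : ‖circleMap 0 1 (2 * x) - (Real.exp (-2 * ζ) : ℂ)‖ ^ 2 =
      4 * Real.exp (-2 * ζ) * (Real.sin x ^ 2 + Real.sinh ζ ^ 2) := by
    have hz : circleMap 0 1 (2 * x) - (Real.exp (-2 * ζ) : ℂ) =
        ⟨Real.cos (2 * x) - Real.exp (-2 * ζ), Real.sin (2 * x)⟩ := by
      apply Complex.ext
      · rw [Complex.sub_re, Complex.ofReal_re]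
        simp [circleMap, Complex.exp_re]
      · rw [Complex.sub_im, Complex.ofReal_im]
        simp [circleMap, Complex.exp_im]
    rw [hz, ← Complex.normSq_eq_norm_sq, Complex.normSq_mk, mul_add, hsq]
    have h1 := Real.sin_sq_add_cos_sq (2 * x)
    have h2 := Real.cos_two_mul x
    have h3 := Real.sin_sq_add_cos_sq x
    linear_combination h1 - 2 * Real.exp (-2 * ζ) * h2 - 4 * Real.exp (-2 * ζ) * h3
  have hP : poissonKernel 0 (Real.exp (-2 * ζ) : ℂ) (circleMap 0 1 (2 * x)) =
      Real.sinh (2 * ζ) / (2 * (Real.sin x ^ 2 + Real.sinh ζ ^ 2)) := by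
    rw [poissonKernel_def]
    simp only [sub_zero]
    rw [hden, Complex.norm_real, Real.norm_of_nonneg hq.le, norm_circleMap_zero, abs_one, one_pow,
      hnum]
    field_simp
    ring
  rw [hP, mul_assoc, kernel_denominator]
  have hpi : (Real.pi : ℂ) ≠ 0 := by exact_mod_cast Real.pi_ne_zero
  have hD' : ((Real.sin x ^ 2 + Real.sinh ζ ^ 2 : ℝ) : ℂ) ≠ 0 := by exact_mod_cast hD.ne'
  rw [Complex.ofReal_div, Complex.ofReal_mul, Complex.ofReal_sinh]
  push_cast at hD' ⊢
  field_simp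

/-- The Poisson integral formula for `z ↦ z ^ m` at `e^{-2ζ}`, in the variable `x = θ / 2`. -/
lemma integral_kernel_nat (ζ : ℝ) (hζ : 0 < ζ) (m : ℕ) :
    ∫ x in (-(Real.pi / 2))..(Real.pi / 2),
      Complex.sinh (2 * ζ) /
          (2 * Real.pi * Complex.sin ((x : ℂ) + Complex.I * ζ) *
            Complex.sin ((x : ℂ) - Complex.I * ζ)) *
        Complex.exp (2 * Complex.I * m * x) =
    (Real.exp (-2 * ζ) : ℂ) ^ m := by
  set q : ℂ := (Real.exp (-2 * ζ) : ℂ) with hq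
  have hqm : q ∈ Metric.ball (0 : ℂ) 1 := by
    rw [mem_ball_zero_iff, hq, Complex.norm_real, Real.norm_of_nonneg (Real.exp_pos _).le,
      Real.exp_lt_one_iff]
    linarith
  have hf : DiffContOnCl ℂ (fun z : ℂ => z ^ m) (Metric.ball 0 1) :=
    (differentiable_id.pow m).diffContOnCl
  have key := hf.circleAverage_poissonKernel_smul hqm
  -- Centre the circle parameter at `0` before substituting `θ = 2x`.
  rw [Real.circleAverage_eq_integral_add (-Real.pi),
    intervalIntegral.integral_comp_add_right
      (fun θ => (poissonKernel 0 q • fun z : ℂ => z ^ m) (circleMap 0 1 θ))] at key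
  rw [← key]
  have hsub := intervalIntegral.integral_comp_mul_left (a := -(Real.pi / 2)) (b := Real.pi / 2)
    (fun θ => (poissonKernel 0 q • fun z : ℂ => z ^ m) (circleMap 0 1 θ)) (two_ne_zero (α := ℝ))
  have e1 : (2 : ℝ) * -(Real.pi / 2) = 0 + -Real.pi := by ring
  have e2 : (2 : ℝ) * (Real.pi / 2) = 2 * Real.pi + -Real.pi := by ring
  rw [e1, e2] at hsub
  rw [mul_inv, mul_comm (2 : ℝ)⁻¹, mul_smul, ← hsub, ← intervalIntegral.integral_smul]
  refine intervalIntegral.integral_congr fun x _ => ?_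
  rw [kernel_eq_poissonKernel ζ hζ, Pi.smul_apply', Complex.real_smul, Complex.real_smul,
    mul_assoc, Complex.ofReal_inv]
  congr 2
  rw [circleMap_zero, Complex.ofReal_one, one_mul, ← Complex.exp_nat_mul]
  congr 1
  push_cast
  ring

/-- the Fourier coefficients of the kernel `K`:
`∫_{−π/2}^{π/2} K(λ)·e^{2inλ} dλ = e^{−2ζ|n|}`. -/
theorem stmt_6 (ζ : ℝ) (hζ : 0 < ζ) (n : ℤ) :
    ∫ x in (-(Real.pi / 2))..(Real.pi / 2),
      Complex.sinh (2 * ζ) /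
          (2 * Real.pi * Complex.sin ((x : ℂ) + Complex.I * ζ) *
            Complex.sin ((x : ℂ) - Complex.I * ζ)) *
        Complex.exp (2 * Complex.I * n * x) =
    (Real.exp (-2 * ζ * |(n : ℝ)|) : ℂ) := by
  have hexp (m : ℕ) : (Real.exp (-2 * ζ * (m : ℝ)) : ℂ) = (Real.exp (-2 * ζ) : ℂ) ^ m := by
    rw [← Complex.ofReal_pow, ← Real.exp_nat_mul, mul_comm]
  obtain ⟨m, rfl | rfl⟩ := n.eq_nat_or_neg
  · have h := integral_kernel_nat ζ hζ m
    simp only [Int.cast_natCast, Nat.abs_cast]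
    rw [hexp, ← h]
  · have h := integral_kernel_nat ζ hζ m
    simp only [Int.cast_neg, Int.cast_natCast, abs_neg, Nat.abs_cast]
    rw [hexp, ← h]
    have hneg := intervalIntegral.integral_comp_neg (a := -(Real.pi / 2)) (b := Real.pi / 2)
      (fun x : ℝ => Complex.sinh (2 * ζ) /
          (2 * Real.pi * Complex.sin ((x : ℂ) + Complex.I * ζ) *
            Complex.sin ((x : ℂ) - Complex.I * ζ)) *
        Complex.exp (2 * Complex.I * m * x))
    rw [neg_neg] at hneg
    rw [← hneg]
    refine intervalIntegral.integral_congr fun x _ => ?_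
    simp only [mul_assoc (2 * (Real.pi : ℂ)), kernel_denominator, Real.sin_neg, neg_sq]
    simp only [Complex.ofReal_neg, mul_neg, neg_mul]
end

section
/- For every integer n ∈ ℤ and every real λ: ∫_{−π/2}^{π/2} K(λ−μ)·e^{2inμ} dμ = e^{−2ζ|n|}·e^{2inλ}; i.e. the integral operator on the interval (−π/2, π/2) with kernel K(λ−μ) has the exponentials e^{2inλ} as eigenfunctions with eigenvalues e^{−2ζ|n|} = q^{−2|n|}, q = e^{ζ}. -/
/-!
The kernel is a rescaled Poisson kernel: summing the two geometric series of ratios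
`e^{-2ζ ± 2it}`, both of norm `e^{-2ζ} < 1`, gives

  `∑_{k ∈ ℤ} e^{-2ζ|k|} e^{2ikt} = sinh (2ζ) / (2 sin (t + iζ) sin (t - iζ))`

(`hasSum_poisson_kernel`). With `t = λ - x`, multiply by `e^{2inx} / π` and integrate over `x` term
by term. The series is dominated by the convergent series of the constants `e^{-2ζ|k|} / π`, and by
orthogonality of the exponentials on an interval of length `π` (`integral_exp_two_I`) only the term
`k = n` survives.
-/

/-- Orthogonality of the `π`-periodic exponentials. -/
lemma integral_exp_two_I (m : ℤ) :
    ∫ x : ℝ in (-(Real.pi / 2))..(Real.pi / 2), Complex.exp (2 * Complex.I * m * x) =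
      if m = 0 then (Real.pi : ℂ) else 0 := by
  split_ifs with h
  · subst h
    simp
  · have hc : (2 * Complex.I * m : ℂ) ≠ 0 := by simp [h]
    rw [integral_exp_mul_complex hc]
    have hper : Complex.exp (2 * Complex.I * m * ((Real.pi / 2 : ℝ) : ℂ)) =
        Complex.exp (2 * Complex.I * m * ((-(Real.pi / 2) : ℝ) : ℂ)) := by
      rw [Complex.exp_eq_exp_iff_exists_int]
      exact ⟨m, by push_cast; ring⟩
    rw [hper, sub_self, zero_div]

/-- The closed form of the two-sided geometric series, in the variables `a = e^{it}`,
`q = e^ζ`. -/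
lemma poisson_closed_form (ζ t : ℝ)
    (h₁ : 1 - Complex.exp (-2 * ζ + 2 * Complex.I * t) ≠ 0)
    (h₂ : 1 - Complex.exp (-2 * ζ - 2 * Complex.I * t) ≠ 0) :
    (1 - Complex.exp (-2 * ζ + 2 * Complex.I * t))⁻¹ +
      Complex.exp (-2 * ζ - 2 * Complex.I * t) *
        (1 - Complex.exp (-2 * ζ - 2 * Complex.I * t))⁻¹ =
    Complex.sinh (2 * ζ) /
      (2 * Complex.sin (t + Complex.I * ζ) * Complex.sin (t - Complex.I * ζ)) := by
  have ha := Complex.exp_ne_zero (Complex.I * t)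
  have hq := Complex.exp_ne_zero (ζ : ℂ)
  have e₁ : Complex.exp (-2 * ζ + 2 * Complex.I * t) =
      Complex.exp (Complex.I * t) ^ 2 / Complex.exp (ζ : ℂ) ^ 2 := by
    rw [← Complex.exp_nat_mul, ← Complex.exp_nat_mul, ← Complex.exp_sub]
    congr 1; push_cast; ring
  have e₂ : Complex.exp (-2 * ζ - 2 * Complex.I * t) =
      1 / (Complex.exp (Complex.I * t) ^ 2 * Complex.exp (ζ : ℂ) ^ 2) := by
    rw [← Complex.exp_nat_mul, ← Complex.exp_nat_mul, ← Complex.exp_add, one_div,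
      ← Complex.exp_neg]
    congr 1; push_cast; ring
  have s₁ : Complex.sin (t + Complex.I * ζ) =
      (Complex.exp (ζ : ℂ) / Complex.exp (Complex.I * t) -
        Complex.exp (Complex.I * t) / Complex.exp (ζ : ℂ)) * Complex.I / 2 := by
    rw [Complex.sin, ← Complex.exp_sub, ← Complex.exp_sub]
    congr 4 <;> linear_combination (norm := ring_nf) (ζ : ℂ) * Complex.I_sq <;> simp
  have s₂ : Complex.sin (t - Complex.I * ζ) =
      (1 / (Complex.exp (Complex.I * t) * Complex.exp (ζ : ℂ)) -
        Complex.exp (Complex.I * t) * Complex.exp (ζ : ℂ)) * Complex.I / 2 := by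
    rw [Complex.sin, ← Complex.exp_add, one_div, ← Complex.exp_neg]
    congr 4 <;> linear_combination (norm := ring_nf) (ζ : ℂ) * Complex.I_sq <;> simp
  have s₃ : Complex.sinh (2 * ζ) =
      (Complex.exp (ζ : ℂ) ^ 2 - 1 / Complex.exp (ζ : ℂ) ^ 2) / 2 := by
    rw [Complex.sinh, ← Complex.exp_nat_mul, one_div, ← Complex.exp_neg]
    congr 3
  rw [e₁] at h₁
  rw [e₂] at h₂
  rw [e₁, e₂, s₁, s₂, s₃]
  generalize Complex.exp (Complex.I * t) = a at *
  generalize Complex.exp (ζ : ℂ) = q at *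
  have k₁ : q ^ 2 - a ^ 2 ≠ 0 := by
    intro h; apply h₁; field_simp; simpa using h
  have k₂ : a ^ 2 * q ^ 2 - 1 ≠ 0 := by
    intro h; apply h₂; field_simp; simpa using h
  have d₁ : 1 - a ^ 2 / q ^ 2 = (q ^ 2 - a ^ 2) / q ^ 2 := by field_simp
  have d₂ : 1 - 1 / (a ^ 2 * q ^ 2) = (a ^ 2 * q ^ 2 - 1) / (a ^ 2 * q ^ 2) := by field_simp
  have d₃ : 2 * ((q / a - a / q) * Complex.I / 2) * ((1 / (a * q) - a * q) * Complex.I / 2) =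
      (q ^ 2 - a ^ 2) * (a ^ 2 * q ^ 2 - 1) / (2 * a ^ 2 * q ^ 2) := by
    field_simp
    rw [Complex.I_sq]
    ring
  rw [d₁, d₂, d₃]
  clear d₁ d₂ d₃ h₁ h₂ e₁ e₂ s₁ s₂ s₃
  obtain ⟨D, hD⟩ : ∃ D, D = a ^ 2 * q ^ 2 - 1 := ⟨_, rfl⟩
  rw [← hD] at k₂ ⊢
  field_simp
  rw [hD]
  ring

/-- The Fourier expansion of the (unnormalised) kernel. -/
lemma hasSum_poisson_kernel (ζ : ℝ) (hζ : 0 < ζ) (t : ℝ) :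
    HasSum (fun k : ℤ => (Real.exp (-2 * ζ * |(k : ℝ)|) : ℂ) * Complex.exp (2 * Complex.I * k * t))
      (Complex.sinh (2 * ζ) /
        (2 * Complex.sin (t + Complex.I * ζ) * Complex.sin (t - Complex.I * ζ))) := by
  have n₁ : ‖Complex.exp (-2 * ζ + 2 * Complex.I * t)‖ < 1 := by
    rw [Complex.norm_exp]; simpa using hζ
  have n₂ : ‖Complex.exp (-2 * ζ - 2 * Complex.I * t)‖ < 1 := by
    rw [Complex.norm_exp]; simpa using hζ
  have ne : ∀ w : ℂ, ‖w‖ < 1 → 1 - w ≠ 0 := by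
    intro w hw h
    rw [← sub_eq_zero.mp h] at hw
    simp at hw
  rw [← poisson_closed_form ζ t (ne _ n₁) (ne _ n₂)]
  apply HasSum.of_nat_of_neg_add_one
  · refine (congrArg (HasSum · _) (funext fun k => ?_)).mpr (hasSum_geometric_of_norm_lt_one n₁)
    rw [← Complex.exp_nat_mul, Complex.ofReal_exp, ← Complex.exp_add]
    congr 1
    simp
    ring
  · refine (congrArg (HasSum · _) (funext fun k => ?_)).mpr ((hasSum_geometric_of_norm_lt_one n₂).mul_left _)
    rw [← Complex.exp_nat_mul, Complex.ofReal_exp, ← Complex.exp_add, ← Complex.exp_add]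
    congr 1
    have : |((-((k : ℤ) + 1) : ℤ) : ℝ)| = k + 1 := by
      push_cast
      rw [abs_neg, abs_of_nonneg (by positivity)]
    rw [this]
    push_cast
    ring

lemma summable_exp_neg_abs (ζ : ℝ) (hζ : 0 < ζ) :
    Summable (fun k : ℤ => Real.exp (-2 * ζ * |(k : ℝ)|)) := by
  have h := (hasSum_poisson_kernel ζ hζ 0).summable
  rw [← Complex.summable_ofReal]
  simpa using h

/-- the exponentials `e^{2inλ}` are eigenfunctions of the integral
operator with kernel `K(λ−μ)` on `(−π/2, π/2)`, with eigenvalues `e^{−2ζ|n|}`. -/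
theorem stmt_7 (ζ : ℝ) (hζ : 0 < ζ) (n : ℤ) (lam : ℝ) :
    ∫ x in (-(Real.pi / 2))..(Real.pi / 2),
      Complex.sinh (2 * ζ) /
          (2 * Real.pi * Complex.sin (((lam - x : ℝ) : ℂ) + Complex.I * ζ) *
            Complex.sin (((lam - x : ℝ) : ℂ) - Complex.I * ζ)) *
        Complex.exp (2 * Complex.I * n * x) =
    (Real.exp (-2 * ζ * |(n : ℝ)|) : ℂ) * Complex.exp (2 * Complex.I * n * lam) := by
  have hpi : (Real.pi : ℂ) ≠ 0 := by exact_mod_cast Real.pi_ne_zero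
  -- `c k` collects the `x`-independent factors of the `k`-th term.
  let c : ℤ → ℂ := fun k =>
    (Real.pi : ℂ)⁻¹ * (Real.exp (-2 * ζ * |(k : ℝ)|) : ℂ) * Complex.exp (2 * Complex.I * k * lam)
  have norm_exp_one : ∀ (k : ℤ) (y : ℝ), ‖Complex.exp (2 * Complex.I * k * y)‖ = 1 := by
    intro k y
    rw [Complex.norm_exp]
    simp
  have key := intervalIntegral.hasSum_integral_of_dominated_convergence
    (μ := MeasureTheory.volume) (a := -(Real.pi / 2)) (b := Real.pi / 2)
    (F := fun (k : ℤ) (x : ℝ) => c k * Complex.exp (2 * Complex.I * ((n - k : ℤ) : ℂ) * x))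
    (f := fun x : ℝ => Complex.sinh (2 * ζ) /
          (2 * Real.pi * Complex.sin (((lam - x : ℝ) : ℂ) + Complex.I * ζ) *
            Complex.sin (((lam - x : ℝ) : ℂ) - Complex.I * ζ)) *
        Complex.exp (2 * Complex.I * n * x))
    (fun k _ => Real.pi⁻¹ * Real.exp (-2 * ζ * |(k : ℝ)|))
    (fun k => Continuous.aestronglyMeasurable (by fun_prop))
    (fun k => Filter.Eventually.of_forall fun x _ => by
      simp only [c, norm_mul, norm_exp_one, mul_one, norm_inv, Complex.norm_real, Real.norm_eq_abs,
        Real.abs_exp, abs_of_pos Real.pi_pos, le_refl])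
    (Filter.Eventually.of_forall fun x _ => (summable_exp_neg_abs ζ hζ).mul_left _)
    intervalIntegrable_const
    (Filter.Eventually.of_forall fun x _ => by
      have hs := ((hasSum_poisson_kernel ζ hζ (lam - x)).mul_left (Real.pi : ℂ)⁻¹).mul_right
        (Complex.exp (2 * Complex.I * n * x))
      have hK : Complex.sinh (2 * ζ) /
            (2 * Real.pi * Complex.sin (((lam - x : ℝ) : ℂ) + Complex.I * ζ) *
              Complex.sin (((lam - x : ℝ) : ℂ) - Complex.I * ζ)) =
          (Real.pi : ℂ)⁻¹ * (Complex.sinh (2 * ζ) /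
            (2 * Complex.sin (((lam - x : ℝ) : ℂ) + Complex.I * ζ) *
              Complex.sin (((lam - x : ℝ) : ℂ) - Complex.I * ζ))) := by
        simp only [div_eq_mul_inv, mul_inv]
        ring
      rw [hK]
      refine (congrArg (HasSum · _) (funext fun k => ?_)).mpr hs
      · have : Complex.exp (2 * Complex.I * k * lam) *
              Complex.exp (2 * Complex.I * ((n - k : ℤ) : ℂ) * x) =
            Complex.exp (2 * Complex.I * k * ((lam - x : ℝ) : ℂ)) *
              Complex.exp (2 * Complex.I * n * x) := by
          rw [← Complex.exp_add, ← Complex.exp_add]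
          congr 1
          push_cast
          ring
        simp only [c]
        linear_combination (Real.pi : ℂ)⁻¹ * (Real.exp (-2 * ζ * |(k : ℝ)|) : ℂ) * this)
  simp only [intervalIntegral.integral_const_mul, integral_exp_two_I] at key
  have single := hasSum_single (f := fun k : ℤ => c k * if n - k = 0 then (Real.pi : ℂ) else 0) n
    (fun k hk => by simp [sub_eq_zero, hk.symm])
  rw [key.unique single]
  simp only [c, sub_self, if_true]
  field_simp
end

section
/- ∫_{−π/2}^{π/2} V(λ) dλ = −1, where V(λ) = (e^{2iλ} − cosh ζ)/(2π·sin(λ+iζ/2)·sin(λ−iζ/2)). -/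
/-!
Put `u = exp (2ix)` and `q = exp (-ζ) ∈ (0, 1)`. The product-to-sum formula gives
`sin (x + iζ/2) sin (x - iζ/2) = (cosh ζ - cos 2x) / 2 = (1 - q u) (1 - q u⁻¹) / (4 q)`, and a partial
fraction decomposition turns the integrand into
`-(1/π) (1 + q u⁻¹ / (1 - q u⁻¹) - q u / (1 - q u))`.
As `|q u| = |q u⁻¹| = q < 1`, both `1 - q u` and `1 - q u⁻¹` lie in the slit plane, so
`-(1/π) (x + (log (1 - q u⁻¹) + log (1 - q u)) / (2i))` is an antiderivative on all of `ℝ`.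
Its logarithmic part has period `π`, and the linear part contributes `-1`.
-/

/-- The factors `1 - q exp (± 2ix)` stay in the domain where the principal logarithm is smooth. -/
lemma one_sub_mem_slitPlane (ζ : ℝ) (hζ : 0 < ζ) (t : ℝ) :
    1 - Complex.exp (-ζ) * Complex.exp (t * Complex.I) ∈ Complex.slitPlane := by
  have hn : ‖-(Complex.exp (-ζ) * Complex.exp (t * Complex.I))‖ < 1 := by
    rw [norm_neg, norm_mul, Complex.norm_exp_ofReal_mul_I, mul_one, Complex.norm_exp]
    simpa using hζ
  simpa [sub_eq_add_neg] using Complex.mem_slitPlane_of_norm_lt_one hn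

/-- With `q = exp (-ζ)` and `u = exp (2ix)`, the product of sines in the denominator equals
`(1 - q u) (1 - q u⁻¹) / (4 q)`. -/
lemma sin_mul_sin_factor (ζ x : ℂ) :
    Complex.sin (x + Complex.I * ζ / 2) * Complex.sin (x - Complex.I * ζ / 2) =
      Complex.exp ζ * (1 - Complex.exp (-ζ) * Complex.exp (2 * x * Complex.I)) *
        (1 - Complex.exp (-ζ) * Complex.exp (-2 * x * Complex.I)) / 4 := by
  have h1 : Complex.sin (x + Complex.I * ζ / 2) * Complex.sin (x - Complex.I * ζ / 2) =
      (Complex.cosh ζ - Complex.cos (2 * x)) / 2 := by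
    have e1 : Complex.cosh ζ =
        Complex.cos ((x + Complex.I * ζ / 2) - (x - Complex.I * ζ / 2)) := by
      rw [← Complex.cos_mul_I]; congr 1; ring
    have e2 : 2 * x = (x + Complex.I * ζ / 2) + (x - Complex.I * ζ / 2) := by ring
    rw [e1, e2, Complex.cos_sub (x + Complex.I * ζ / 2), Complex.cos_add (x + Complex.I * ζ / 2)]
    ring
  have hq : Complex.exp ζ * Complex.exp (-ζ) = 1 := by rw [← Complex.exp_add]; simp
  have hu : Complex.exp (2 * x * Complex.I) * Complex.exp (-2 * x * Complex.I) = 1 := by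
    rw [← Complex.exp_add]; simp
  rw [h1, Complex.cosh, Complex.cos,
    show -(2 * x) * Complex.I = -2 * x * Complex.I by ring]
  linear_combination
    (Complex.exp (2 * x * Complex.I) + Complex.exp (-2 * x * Complex.I)
      - Complex.exp (-ζ)) / 4 * hq
      - Complex.exp ζ * Complex.exp (-ζ) ^ 2 / 4 * hu

/-- The antiderivative of the integrand, valid on the whole real line. -/
lemma hasDerivAt_antideriv (ζ : ℝ) (hζ : 0 < ζ) (x : ℝ) :
    HasDerivAt (fun x : ℝ => -(1 / (Real.pi : ℂ)) * ((x : ℂ) + 1 / (2 * Complex.I) *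
        (Complex.log (1 - Complex.exp (-ζ) * Complex.exp (-2 * x * Complex.I)) +
         Complex.log (1 - Complex.exp (-ζ) * Complex.exp (2 * x * Complex.I)))))
      ((Complex.exp (2 * Complex.I * x) - Complex.cosh ζ) /
        (2 * Real.pi * Complex.sin ((x : ℂ) + Complex.I * ζ / 2) *
          Complex.sin ((x : ℂ) - Complex.I * ζ / 2))) x := by
  have hA := one_sub_mem_slitPlane ζ hζ (2 * x)
  have hB := one_sub_mem_slitPlane ζ hζ (-2 * x)
  push_cast at hA hB
  have hx : HasDerivAt (fun x : ℝ => (x : ℂ)) 1 x := Complex.ofRealCLM.hasDerivAt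
  have dlog (c : ℂ)
      (hc : 1 - Complex.exp (-ζ) * Complex.exp (c * x * Complex.I) ∈ Complex.slitPlane) :=
    (((((hx.const_mul c).mul_const Complex.I).cexp).const_mul
      (Complex.exp (-ζ))).const_sub 1).clog_real hc
  have h := (hx.add (((dlog (-2) hB).add (dlog 2 hA)).const_mul
    (1 / (2 * Complex.I)))).const_mul (-(1 / (Real.pi : ℂ)))
  refine h.congr_deriv ?_
  have hA0 := Complex.slitPlane_ne_zero hA
  have hB0 := Complex.slitPlane_ne_zero hB
  rw [mul_assoc (2 * (Real.pi : ℂ)), sin_mul_sin_factor, Complex.cosh,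
    show 2 * Complex.I * (x : ℂ) = 2 * x * Complex.I by ring]
  have hq : Complex.exp ζ * Complex.exp (-ζ) = 1 := by rw [← Complex.exp_add]; simp
  have hu : Complex.exp (2 * x * Complex.I) * Complex.exp (-2 * x * Complex.I) = 1 := by
    rw [← Complex.exp_add]; simp
  have hQ0 := Complex.exp_ne_zero (ζ : ℂ)
  have hpi : (Real.pi : ℂ) ≠ 0 := by exact_mod_cast Real.pi_ne_zero
  have hI := Complex.I_ne_zero
  generalize Complex.exp (2 * x * Complex.I) = u at *
  generalize Complex.exp (-2 * x * Complex.I) = v at *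
  generalize Complex.exp (-(ζ : ℂ)) = q at *
  generalize Complex.exp (ζ : ℂ) = Q at *
  field_simp
  linear_combination (8 * u - 4 * q * u * v) * hq - 4 * q * hu

theorem stmt_8 (ζ : ℝ) (hζ : 0 < ζ) :
    ∫ x in (-(Real.pi / 2))..(Real.pi / 2),
      (Complex.exp (2 * Complex.I * x) - Complex.cosh ζ) /
        (2 * Real.pi * Complex.sin ((x : ℂ) + Complex.I * ζ / 2) *
          Complex.sin ((x : ℂ) - Complex.I * ζ / 2)) =
    (-1 : ℂ) := by
  have hpi : (Real.pi : ℂ) ≠ 0 := by exact_mod_cast Real.pi_ne_zero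
  rw [intervalIntegral.integral_eq_sub_of_hasDerivAt
    (fun x _ => hasDerivAt_antideriv ζ hζ x)]
  -- At both endpoints `exp (± 2ix) = -1`, so the logarithms cancel.
  · have e1 : (-2 : ℂ) * ((Real.pi / 2 : ℝ) : ℂ) * Complex.I = -(Real.pi * Complex.I) := by
      push_cast; ring
    have e2 : (2 : ℂ) * ((Real.pi / 2 : ℝ) : ℂ) * Complex.I = Real.pi * Complex.I := by
      push_cast; ring
    have e3 : (-2 : ℂ) * ((-(Real.pi / 2) : ℝ) : ℂ) * Complex.I = Real.pi * Complex.I := by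
      push_cast; ring
    have e4 : (2 : ℂ) * ((-(Real.pi / 2) : ℝ) : ℂ) * Complex.I = -(Real.pi * Complex.I) := by
      push_cast; ring
    rw [e1, e2, e3, e4, Complex.exp_neg, Complex.exp_pi_mul_I]
    push_cast
    field_simp
    ring
  · refine ContinuousOn.intervalIntegrable fun x _ => ContinuousAt.continuousWithinAt ?_
    have hA := Complex.slitPlane_ne_zero (one_sub_mem_slitPlane ζ hζ (2 * x))
    have hB := Complex.slitPlane_ne_zero (one_sub_mem_slitPlane ζ hζ (-2 * x))
    push_cast at hA hB
    refine ContinuousAt.div (by fun_prop) (by fun_prop) ?_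
    rw [mul_assoc (2 * (Real.pi : ℂ)), sin_mul_sin_factor]
    have hQ0 := Complex.exp_ne_zero (ζ : ℂ)
    exact mul_ne_zero (mul_ne_zero two_ne_zero hpi)
      (div_ne_zero (mul_ne_zero (mul_ne_zero hQ0 hA) hB) (by norm_num))
end

section
/- Let g : ℝ → ℂ be infinitely differentiable with π-periodic derivative g′, and let β ∈ ℝ. Set c = (g(π) − g(0))/2. Then for every k ∈ ℕ there exists a constant C > 0 such that for all integers N ≥ 1: | (1/N)·∑_{j=1}^{N} g(β + jπ/N) − (1/π)·∫_{β}^{β+π} g(λ) dλ − c/N | ≤ C·N^{−k}. In other words, the only power-law finite-size correction to the Riemann sum of a function with periodic derivative is of order 1/N, with coefficient independent of N. -/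
/-!
The proof is the Euler–Maclaurin expansion on the cells of the grid `β + jπ/N`, of width
`h = π/N`. Write `A m f` for the average over the `N` cells `[x, x + h]` of
`∫₀¹ Bₘ(t) f(x + h t) dt`, where `Bₘ` is the Bernoulli polynomial. Integration by parts on a
cell (`cell_parts`) uses `B'ₘ₊₁ = (m + 1) Bₘ`.

* For `m = 0`, with `B₁(1) = 1/2 = -B₁(0)`, it shows that the quantity to be estimated is
  exactly `h • A 1 g'`; the boundary terms make up the trapezoidal sum, which differs from the
  Riemann sum by `(g(β + π) - g(β)) / 2 = c`.
* For `m ≥ 1`, `Bₘ₊₁(0) = Bₘ₊₁(1)`, so for a `π`-periodic `f` the boundary terms telescope to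
  zero and `(m + 1) A m f = -h • A (m + 1) f'` (`cellAvg_step`). Each derivative gains a factor
  `1/N`, and `A m f` is bounded uniformly in `N`, so `A m f = O(N⁻ᵏ)` for all `k`
  (`cellAvg_decay`).
-/

/-- The average, over the cells `[β + jπ/N, β + (j+1)π/N]` with `j < N`, of `f` integrated
against the `m`-th Bernoulli polynomial in the rescaled variable `t ∈ [0, 1]` of the cell. -/
noncomputable def cellAvg (β : ℝ) (N m : ℕ) (f : ℝ → ℂ) : ℂ :=
  (1 / (N : ℂ)) * ∑ j ∈ Finset.range N,
    ∫ t in (0 : ℝ)..1, (bernoulliFun m t : ℂ) * f (β + j * Real.pi / N + Real.pi / N * t)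

lemma cell_parts {f : ℝ → ℂ} (hf : ContDiff ℝ (⊤ : ℕ∞) f) (m : ℕ) (a h : ℝ) :
    (h : ℂ) * ∫ t in (0 : ℝ)..1, (bernoulliFun (m + 1) t : ℂ) * deriv f (a + h * t) =
      (bernoulliFun (m + 1) 1 : ℂ) * f (a + h) - (bernoulliFun (m + 1) 0 : ℂ) * f a -
        ((m : ℂ) + 1) * ∫ t in (0 : ℝ)..1, (bernoulliFun m t : ℂ) * f (a + h * t) := by
  have hdiff : Differentiable ℝ f := hf.differentiable (by simp)
  have hcd : Continuous (deriv f) := hf.continuous_deriv (by simp)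
  have hB : Continuous (bernoulliFun m) := continuous_bernoulliFun m
  have hu : ∀ t ∈ Set.uIcc (0 : ℝ) 1, HasDerivAt (fun t => (bernoulliFun (m + 1) t : ℂ))
      (((m : ℂ) + 1) * bernoulliFun m t) t := by
    intro t _
    have := (hasDerivAt_bernoulliFun (m + 1) t).ofReal_comp
    simpa using this
  have hv : ∀ t ∈ Set.uIcc (0 : ℝ) 1, HasDerivAt (fun t => f (a + h * t))
      ((h : ℂ) * deriv f (a + h * t)) t := by
    intro t _
    have h1 : HasDerivAt (fun t : ℝ => a + h * t) h t := by
      simpa using ((hasDerivAt_id t).const_mul h).const_add a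
    simpa [Function.comp_def] using (hdiff (a + h * t)).hasDerivAt.scomp t h1
  have key := intervalIntegral.integral_mul_deriv_eq_deriv_mul hu hv
    (Continuous.intervalIntegrable (by fun_prop) _ _)
    (Continuous.intervalIntegrable (by fun_prop) _ _)
  simp only [mul_one, mul_zero, add_zero] at key
  rw [← intervalIntegral.integral_const_mul, ← intervalIntegral.integral_const_mul]
  simp only [mul_assoc, mul_left_comm _ (h : ℂ)] at key ⊢
  exact key

lemma node_succ (β : ℝ) (N j : ℕ) :
    β + j * Real.pi / N + Real.pi / N = β + ((j + 1 : ℕ) : ℝ) * Real.pi / N := by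
  push_cast; ring

lemma node_last (β : ℝ) {N : ℕ} (hN : 1 ≤ N) : β + (N : ℝ) * Real.pi / N = β + Real.pi := by
  have : (N : ℝ) ≠ 0 := by positivity
  field_simp

/-- One integration by parts on every cell; the boundary terms telescope over a period. -/
lemma cellAvg_step {f : ℝ → ℂ} (hf : ContDiff ℝ (⊤ : ℕ∞) f)
    (hper : Function.Periodic f Real.pi) (β : ℝ) {N m : ℕ} (hN : 1 ≤ N) (hm : 1 ≤ m) :
    ((m : ℂ) + 1) * cellAvg β N m f =
      -(((Real.pi / N : ℝ) : ℂ) * cellAvg β N (m + 1) (deriv f)) := by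
  have htel : ∑ j ∈ Finset.range N, (f (β + ((j + 1 : ℕ) : ℝ) * Real.pi / N) -
      f (β + (j : ℝ) * Real.pi / N)) = 0 := by
    rw [Finset.sum_range_sub (fun j : ℕ => f (β + (j : ℝ) * Real.pi / N)), node_last β hN, hper β]
    simp
  have hB : bernoulliFun (m + 1) 1 = bernoulliFun (m + 1) 0 :=
    by
    rw [bernoulliFun_eval_one, ite_cond_eq_false _ _ (by simp; omega), add_zero]
  have hsum : ((Real.pi / N : ℝ) : ℂ) * ∑ j ∈ Finset.range N, (∫ t in (0 : ℝ)..1,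
        (bernoulliFun (m + 1) t : ℂ) * deriv f (β + j * Real.pi / N + Real.pi / N * t)) =
      -(((m : ℂ) + 1) * ∑ j ∈ Finset.range N, ∫ t in (0 : ℝ)..1,
        (bernoulliFun m t : ℂ) * f (β + j * Real.pi / N + Real.pi / N * t)) := by
    rw [Finset.mul_sum]
    simp only [cell_parts hf, node_succ, hB, ← mul_sub]
    rw [Finset.sum_sub_distrib, ← Finset.mul_sum, ← Finset.mul_sum, htel]
    simp
  unfold cellAvg
  linear_combination (1 / (N : ℂ)) * hsum

lemma periodic_deriv {f : ℝ → ℂ} {c : ℝ} (hper : Function.Periodic f c) :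
    Function.Periodic (deriv f) c := by
  intro x
  rw [← deriv_comp_add_const]
  congr 1
  exact funext hper

lemma cellAvg_bounded {f : ℝ → ℂ} (hf : Continuous f)
    (hper : Function.Periodic f Real.pi) (β : ℝ) (m : ℕ) :
    ∃ C : ℝ, 0 < C ∧ ∀ N : ℕ, 1 ≤ N → ‖cellAvg β N m f‖ ≤ C := by
  obtain ⟨M, hM⟩ := (hper.isBounded_of_continuous Real.pi_ne_zero hf).exists_norm_le
  obtain ⟨K, hK⟩ := (isCompact_Icc (a := (0 : ℝ)) (b := 1)).exists_bound_of_continuousOn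
    (continuous_bernoulliFun m).continuousOn
  have hM0 : 0 ≤ M := (norm_nonneg _).trans (hM (f 0) ⟨0, rfl⟩)
  have hK0 : 0 ≤ K := (norm_nonneg _).trans (hK 0 (by simp))
  refine ⟨K * M + 1, by positivity, fun N hN => ?_⟩
  have hcell : ∀ j ∈ Finset.range N, ‖∫ t in (0 : ℝ)..1,
      (bernoulliFun m t : ℂ) * f (β + j * Real.pi / N + Real.pi / N * t)‖ ≤ K * M := by
    intro j _
    have := intervalIntegral.norm_integral_le_of_norm_le_const (a := 0) (b := 1) (C := K * M)
      (f := fun t => (bernoulliFun m t : ℂ) * f (β + j * Real.pi / N + Real.pi / N * t)) ?_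
    · simpa using this
    · intro t ht
      rw [Set.uIoc_of_le zero_le_one] at ht
      rw [norm_mul, Complex.norm_real]
      exact mul_le_mul (hK t ⟨ht.1.le, ht.2⟩) (hM _ ⟨_, rfl⟩) (norm_nonneg _) hK0
  have hN' : (0 : ℝ) < N := by exact_mod_cast hN
  have hsum := norm_sum_le_of_le _ hcell
  rw [Finset.sum_const, Finset.card_range, nsmul_eq_mul] at hsum
  unfold cellAvg
  rw [norm_mul, norm_div, norm_one, Complex.norm_natCast, one_div, inv_mul_le_iff₀ hN']
  nlinarith

lemma cellAvg_decay (β : ℝ) (k : ℕ) : ∀ (f : ℝ → ℂ) (m : ℕ), ContDiff ℝ (⊤ : ℕ∞) f →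
    Function.Periodic f Real.pi → 1 ≤ m →
    ∃ C : ℝ, 0 < C ∧ ∀ N : ℕ, 1 ≤ N → ‖cellAvg β N m f‖ ≤ C / (N : ℝ) ^ k := by
  induction k with
  | zero =>
    intro f m hf hper _
    simpa using cellAvg_bounded hf.continuous hper β m
  | succ k ih =>
    intro f m hf hper hm
    obtain ⟨C, hC, hbound⟩ := ih (deriv f) (m + 1) (contDiff_infty_iff_deriv.1 hf).2
      (periodic_deriv hper) (by omega)
    refine ⟨Real.pi * C, by positivity, fun N hN => ?_⟩
    have hN' : (0 : ℝ) < N := by exact_mod_cast hN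
    have hnorm := congrArg norm (cellAvg_step hf hper β hN hm)
    rw [norm_neg, norm_mul, norm_mul, Complex.norm_real, Real.norm_of_nonneg (by positivity),
      show ((m : ℂ) + 1) = ((m + 1 : ℕ) : ℂ) by push_cast; rfl, Complex.norm_natCast] at hnorm
    calc ‖cellAvg β N m f‖ ≤ ((m + 1 : ℕ) : ℝ) * ‖cellAvg β N m f‖ :=
          le_mul_of_one_le_left (norm_nonneg _) (by simp)
      _ = Real.pi / N * ‖cellAvg β N (m + 1) (deriv f)‖ := hnorm
      _ ≤ Real.pi / N * (C / (N : ℝ) ^ k) := by gcongr; exact hbound N hN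
      _ = Real.pi * C / (N : ℝ) ^ (k + 1) := by field_simp; ring

lemma sum_cell_integral {f : ℝ → ℂ} (hf : Continuous f) (β : ℝ) {N : ℕ} (hN : 1 ≤ N) :
    ((Real.pi / N : ℝ) : ℂ) * ∑ j ∈ Finset.range N,
      (∫ t in (0 : ℝ)..1, f (β + j * Real.pi / N + Real.pi / N * t)) =
      ∫ x in β..(β + Real.pi), f x := by
  rw [Finset.mul_sum]
  have hcell : ∀ j ∈ Finset.range N, ((Real.pi / N : ℝ) : ℂ) *
      (∫ t in (0 : ℝ)..1, f (β + j * Real.pi / N + Real.pi / N * t)) =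
      ∫ x in (β + (j : ℝ) * Real.pi / N)..(β + ((j + 1 : ℕ) : ℝ) * Real.pi / N), f x := by
    intro j _
    have := intervalIntegral.smul_integral_comp_add_mul (a := 0) (b := 1) f (Real.pi / N)
      (β + j * Real.pi / N)
    rw [mul_zero, mul_one, add_zero, node_succ, Complex.real_smul] at this
    exact this
  rw [Finset.sum_congr rfl hcell, intervalIntegral.sum_integral_adjacent_intervals
    (a := fun j : ℕ => β + (j : ℝ) * Real.pi / N) (fun j _ => hf.intervalIntegrable _ _),
    node_last β hN]
  simp

/-- The increment of `g` over a period of `g'` does not depend on the starting point. -/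
lemma increment_eq {g : ℝ → ℂ} (hg : Differentiable ℝ g)
    (hper : ∀ x : ℝ, deriv g (x + Real.pi) = deriv g x) (β : ℝ) :
    g (β + Real.pi) - g β = g Real.pi - g 0 := by
  have hd : Differentiable ℝ (fun x => g (x + Real.pi) - g x) := by fun_prop
  have h0 : ∀ x, deriv (fun x => g (x + Real.pi) - g x) x = 0 := by
    intro x
    rw [deriv_fun_sub (by fun_prop) (by fun_prop), deriv_comp_add_const, hper, sub_self]
  simpa using is_const_of_deriv_eq_zero hd h0 β 0

/-- The trapezoidal rule with exact remainder: the `c / N` term turns the right-endpoint Riemann sum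
into the trapezoidal sum. -/
lemma error_eq {g : ℝ → ℂ} (hg : ContDiff ℝ (⊤ : ℕ∞) g)
    (hper : ∀ x : ℝ, deriv g (x + Real.pi) = deriv g x) (β : ℝ) {N : ℕ} (hN : 1 ≤ N) :
    (1 / (N : ℂ)) * ∑ j ∈ Finset.Icc 1 N, g (β + j * Real.pi / N) -
          (1 / (Real.pi : ℂ)) * (∫ x in β..(β + Real.pi), g x) -
          ((g Real.pi - g 0) / 2) / (N : ℂ) =
      ((Real.pi / N : ℝ) : ℂ) * cellAvg β N 1 (deriv g) := by
  have hNC : (N : ℂ) ≠ 0 := by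
    have : N ≠ 0 := by omega
    exact_mod_cast this
  have hπ : (Real.pi : ℂ) ≠ 0 := by exact_mod_cast Real.pi_ne_zero
  have hIcc : ∑ j ∈ Finset.Icc 1 N, g (β + j * Real.pi / N) =
      ∑ j ∈ Finset.range N, g (β + ((j + 1 : ℕ) : ℝ) * Real.pi / N) := by
    rw [← Finset.Ico_add_one_right_eq_Icc, Finset.sum_Ico_eq_sum_range]
    simp [add_comm]
  have htel : ∑ j ∈ Finset.range N, g (β + ((j + 1 : ℕ) : ℝ) * Real.pi / N) -
      ∑ j ∈ Finset.range N, g (β + (j : ℝ) * Real.pi / N) = g Real.pi - g 0 := by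
    rw [← Finset.sum_sub_distrib,
      Finset.sum_range_sub (fun j : ℕ => g (β + (j : ℝ) * Real.pi / N)), node_last β hN,
      ← increment_eq (hg.differentiable (by simp)) hper β]
    simp
  have hint := sum_cell_integral hg.continuous β hN
  have hsum : ((Real.pi / N : ℝ) : ℂ) * ∑ j ∈ Finset.range N, (∫ t in (0 : ℝ)..1,
        (bernoulliFun 1 t : ℂ) * deriv g (β + j * Real.pi / N + Real.pi / N * t)) =
      (1 / 2) * ∑ j ∈ Finset.range N, g (β + ((j + 1 : ℕ) : ℝ) * Real.pi / N) +
      (1 / 2) * ∑ j ∈ Finset.range N, g (β + (j : ℝ) * Real.pi / N) -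
      ∑ j ∈ Finset.range N,
        ∫ t in (0 : ℝ)..1, g (β + j * Real.pi / N + Real.pi / N * t) := by
    rw [Finset.mul_sum, Finset.mul_sum, Finset.mul_sum, ← Finset.sum_add_distrib,
      ← Finset.sum_sub_distrib]
    refine Finset.sum_congr rfl fun j _ => ?_
    have := cell_parts hg 0 (β + j * Real.pi / N) (Real.pi / N)
    simp only [zero_add, bernoulliFun_one, bernoulliFun_zero, node_succ] at this ⊢
    rw [this]
    push_cast
    simp only [one_mul]
    ring
  unfold cellAvg
  rw [hIcc, ← hint, mul_left_comm ((Real.pi / N : ℝ) : ℂ) (1 / (N : ℂ)), hsum, ← htel]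
  -- The sums are made opaque so that the casts inside them are not normalized.
  generalize ∑ j ∈ Finset.range N, g (β + ((j + 1 : ℕ) : ℝ) * Real.pi / N) = S₁
  generalize ∑ j ∈ Finset.range N, g (β + (j : ℝ) * Real.pi / N) = S₀
  generalize ∑ j ∈ Finset.range N,
    (∫ t in (0 : ℝ)..1, g (β + j * Real.pi / N + Real.pi / N * t)) = I
  push_cast
  field_simp
  ring

/-- for a smooth function with π-periodic derivative, the only
power-law correction to the Riemann sum is of order `1/N`, with coefficient
`c = (g(π) − g(0))/2`. -/
theorem stmt_15 (g : ℝ → ℂ) (hg : ContDiff ℝ (⊤ : ℕ∞) g)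
    (hper : ∀ x : ℝ, deriv g (x + Real.pi) = deriv g x) (β : ℝ) (k : ℕ) :
    ∃ C : ℝ, 0 < C ∧ ∀ N : ℕ, 1 ≤ N →
      ‖(1 / (N : ℂ)) * ∑ j ∈ Finset.Icc 1 N, g (β + j * Real.pi / N) -
          (1 / (Real.pi : ℂ)) * (∫ x in β..(β + Real.pi), g x) -
          ((g Real.pi - g 0) / 2) / (N : ℂ)‖ ≤
        C / (N : ℝ) ^ k := by
  obtain ⟨C, hC, hbound⟩ := cellAvg_decay β k (deriv g) 1 (contDiff_infty_iff_deriv.1 hg).2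
    hper le_rfl
  refine ⟨Real.pi * C, by positivity, fun N hN => ?_⟩
  have hN1 : (1 : ℝ) ≤ N := by exact_mod_cast hN
  rw [error_eq hg hper β hN, norm_mul, Complex.norm_real, Real.norm_of_nonneg (by positivity),
    mul_div_assoc]
  exact mul_le_mul (div_le_self Real.pi_pos.le hN1) (hbound N hN) (norm_nonneg _)
    Real.pi_pos.le
end

section
/- Assume cosh ζ > 2 (the regime Δ > 2). Then: (1) 2·tanh(ζ/2) − coth ζ > 0; and (2) for every positive integer N, every real λ and all real λ_1,…,λ_N: sinh ζ/(sin²λ + sinh²(ζ/2)) − (π/N)·∑_{k=1}^{N} sinh(2ζ)/(2π·(sin²(λ−λ_k) + sinh²ζ)) ≥ 2·tanh(ζ/2) − coth ζ. Consequently the counting function q_M(λ) = p₀(λ) + (1/M)∑_{k=1}^{N} θ(λ−λ_k) with M = 2N has derivative q_M′(λ) = p₀′(λ) − (2π/M)∑_{k=1}^{N} K(λ−λ_k) bounded below by the positive constant 2·tanh(ζ/2) − coth ζ, hence is strictly increasing. -/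
/-!
The half-angle formula `tanh (ζ / 2) = (cosh ζ - 1) / sinh ζ` turns the constant
`2 * tanh (ζ / 2) - coth ζ` into `(cosh ζ - 2) / sinh ζ`, which is positive exactly when
`cosh ζ > 2`. For the lower bound, both terms are estimated at their worst case: the bare term is
smallest where `sin² = 1`, with value `sinh ζ / cosh² (ζ / 2) = 2 * tanh (ζ / 2)`, and each kernel
term is largest where `sin² = 0`, with value `coth ζ / π`, so that the average over the `N` roots
contributes at most `coth ζ`.
-/

open Finset

/-- The minimum of the bare momentum derivative, attained where `sin² = 1`. -/
theorem two_tanh_half_le (ζ : ℝ) (hζ : 0 < ζ) (x : ℝ) :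
    2 * Real.tanh (ζ / 2) ≤
      Real.sinh ζ / ((Real.sin x) ^ 2 + (Real.sinh (ζ / 2)) ^ 2) := by
  have ha : 0 < Real.sinh (ζ / 2) := Real.sinh_pos_iff.2 (by linarith)
  have hb := Real.cosh_pos (ζ / 2)
  have hs : Real.sinh ζ = 2 * Real.sinh (ζ / 2) * Real.cosh (ζ / 2) := by
    rw [← Real.sinh_two_mul]; ring_nf
  have hden : Real.sin x ^ 2 + Real.sinh (ζ / 2) ^ 2 ≤ Real.cosh (ζ / 2) ^ 2 := by
    rw [Real.cosh_sq]; linarith [Real.sin_sq_le_one x]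
  calc 2 * Real.tanh (ζ / 2) = Real.sinh ζ / Real.cosh (ζ / 2) ^ 2 := by
        rw [Real.tanh_eq_sinh_div_cosh, hs]; field_simp
    _ ≤ _ := div_le_div_of_nonneg_left (Real.sinh_pos_iff.2 hζ).le (by positivity) hden

/-- The maximum of the kernel, attained where `sin² = 0`. -/
theorem kernel_le (ζ : ℝ) (hζ : 0 < ζ) (x : ℝ) :
    Real.sinh (2 * ζ) / (2 * Real.pi * ((Real.sin x) ^ 2 + (Real.sinh ζ) ^ 2)) ≤
      Real.cosh ζ / Real.sinh ζ / Real.pi := by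
  have hS := Real.sinh_pos_iff.2 hζ
  have hC := Real.cosh_pos ζ
  have hpi := Real.pi_pos
  calc _ ≤ Real.sinh (2 * ζ) / (2 * Real.pi * (Real.sinh ζ) ^ 2) := by
        refine div_le_div_of_nonneg_left (Real.sinh_pos_iff.2 (by linarith)).le (by positivity) ?_
        gcongr
        linarith [sq_nonneg (Real.sin x)]
    _ = _ := by rw [Real.sinh_two_mul]; field_simp

/-- for `Δ = cosh ζ > 2`, the constant `2·tanh(ζ/2) − coth ζ` is
positive and bounds from below the derivative of the counting function:
`p₀′(λ) − (2π/M)·∑ₖ K(λ−λₖ)` with `M = 2N`, i.e.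
`p₀′(λ) − (π/N)·∑ₖ K(λ−λₖ) ≥ 2·tanh(ζ/2) − coth ζ`. -/
theorem stmt_16 (ζ : ℝ) (hζ : 0 < ζ) (hΔ : 2 < Real.cosh ζ) :
    0 < 2 * Real.tanh (ζ / 2) - Real.cosh ζ / Real.sinh ζ ∧
    ∀ N : ℕ, 0 < N → ∀ lam : ℝ, ∀ lamk : Fin N → ℝ,
      2 * Real.tanh (ζ / 2) - Real.cosh ζ / Real.sinh ζ ≤
        Real.sinh ζ / ((Real.sin lam) ^ 2 + (Real.sinh (ζ / 2)) ^ 2) -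
          (Real.pi / N) *
            ∑ k : Fin N,
              Real.sinh (2 * ζ) /
                (2 * Real.pi * ((Real.sin (lam - lamk k)) ^ 2 + (Real.sinh ζ) ^ 2)) := by
  have hS := Real.sinh_pos_iff.2 hζ
  refine ⟨?_, fun N hN lam lamk => ?_⟩
  · have ha : 0 < Real.sinh (ζ / 2) := Real.sinh_pos_iff.2 (by linarith)
    have hb := Real.cosh_pos (ζ / 2)
    have hs : Real.sinh ζ = 2 * Real.sinh (ζ / 2) * Real.cosh (ζ / 2) := by
      rw [← Real.sinh_two_mul]; ring_nf
    have hc : Real.cosh ζ = 2 * Real.sinh (ζ / 2) ^ 2 + 1 := by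
      have h := Real.cosh_two_mul (ζ / 2)
      rw [Real.cosh_sq, mul_div_cancel₀ _ two_ne_zero] at h
      linarith
    have key : Real.tanh (ζ / 2) = (Real.cosh ζ - 1) / Real.sinh ζ := by
      rw [Real.tanh_eq_sinh_div_cosh, hs, hc]; field_simp; ring
    have h : 2 * Real.tanh (ζ / 2) - Real.cosh ζ / Real.sinh ζ
        = (Real.cosh ζ - 2) / Real.sinh ζ := by
      rw [key]; ring
    rw [h]
    exact div_pos (by linarith) hS
  · have hN' : (0 : ℝ) < N := Nat.cast_pos.2 hN
    have hpi := Real.pi_pos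
    have hsum := Finset.sum_le_card_nsmul (Finset.univ : Finset (Fin N)) _ _
      (fun k _ => kernel_le ζ hζ (lam - lamk k))
    rw [Finset.card_univ, Fintype.card_fin, nsmul_eq_mul] at hsum
    have hmul := mul_le_mul_of_nonneg_left hsum (div_pos hpi hN').le
    have heq : Real.pi / N * (N * (Real.cosh ζ / Real.sinh ζ / Real.pi))
        = Real.cosh ζ / Real.sinh ζ := by field_simp
    rw [heq] at hmul
    linarith [two_tanh_half_le ζ hζ lam]
end
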